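/- arXiv:1712.03629 — 2 statements merged into one kernel-verified Lean document; each statement's English description precedes it below -/
import Mathlib

section
/- Let B be a finite-dimensional central division algebra over a nonarchimedean local field K, let L ⊆ B be a K-subalgebra which is a division algebra, and let C be the centralizer of L in B. Then e(L/K) = f(B/C) and f(L/K) = e(B/C), where e and f denote ramification index and residual degree respectively. -/
/-- The number of residue classes of the integers of a sub-division-ring `S`
(the elements of `S` of absolute value ≤ 1) modulo the maximal ideal
(elements of absolute value < 1).  For the ring of integers of a division
subalgebra of a local division algebra this is the cardinality of its residue
field. -/
noncomputable def resCard {B : Type*} [DivisionRing B]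
    (ρ : AbsoluteValue B ℝ) (S : Set B) : ℕ :=
  Nat.card (Quot (fun x y : {b : B // b ∈ S ∧ ρ b ≤ 1} => ρ (x.1 - y.1) < 1))

namespace RRS

/-- operators `x ↦ ∑ l x r` with `l ∈ L`. -/
inductive IsOp {B : Type*} [DivisionRing B] (L : Set B) : (B → B) → Prop
  | zero : IsOp L (fun _ => 0)
  | step (P : B → B) (l r : B) (hP : IsOp L P) (hl : l ∈ L) : IsOp L (fun x => P x + l * x * r)

section ops
variable {B : Type*} [DivisionRing B]

lemma IsOp.map_add {L : Set B} {P : B → B} (hP : IsOp L P) (x y : B) : P (x + y) = P x + P y := by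
  induction hP with
  | zero => simp
  | step P l r hP hl ih => simp only [ih]; noncomm_ring

lemma IsOp.map_smul {L : Set B} {P : B → B} (hP : IsOp L P) (c x : B) (hc : ∀ l ∈ L, l * c = c * l) :
    P (c * x) = c * P x := by
  induction hP with
  | zero => simp
  | step P l r hP hl ih =>
    simp only [ih, mul_add]
    rw [← mul_assoc l c x, hc l hl]; simp only [mul_assoc]

lemma IsOp.map_zero {L : Set B} {P : B → B} (hP : IsOp L P) : P 0 = 0 := by
  have := hP.map_add 0 0
  simpa using this

lemma IsOp.map_sum {L : Set B} {P : B → B} (hP : IsOp L P) {ι : Type*} (s : Finset ι) (f : ι → B) :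
    P (∑ i ∈ s, f i) = ∑ i ∈ s, P (f i) := by
  classical
  induction s using Finset.induction_on with
  | empty => simpa using hP.map_zero
  | insert a s ha ih => rw [Finset.sum_insert ha, Finset.sum_insert ha, hP.map_add, ih]

lemma IsOp.add {L : Set B} {P Q : B → B} (hP : IsOp L P) (hQ : IsOp L Q) :
    IsOp L (fun x => P x + Q x) := by
  induction hQ with
  | zero => simpa using hP
  | step Q l r hQ hl ih => simpa only [add_assoc] using IsOp.step _ l r ih hl

lemma IsOp.mul_right {L : Set B} {P : B → B} (hP : IsOp L P) (b : B) :
    IsOp L (fun x => P x * b) := by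
  induction hP with
  | zero => simpa using IsOp.zero
  | step P l r hP hl ih => simpa only [add_mul, mul_assoc] using IsOp.step _ l (r * b) ih hl

lemma IsOp.mul_left {L : Subring B} {P : B → B} (hP : IsOp (L : Set B) P) (b : B) (hb : b ∈ L) :
    IsOp (L : Set B) (fun x => b * P x) := by
  induction hP with
  | zero => simpa using IsOp.zero
  | step P l r hP hl ih =>
    simpa only [mul_add, mul_assoc] using IsOp.step _ (b * l) r ih (L.mul_mem hb hl)

lemma IsOp.sub {L : Set B} {P Q : B → B} (hP : IsOp L P) (hQ : IsOp L Q) :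
    IsOp L (fun x => P x - Q x) := by
  have := hP.add (hQ.mul_right (-1))
  simpa [sub_eq_add_neg] using this

lemma IsOp.map_span {L : Subring B} {C : Subfield B} (hC : ∀ c, c ∈ C ↔ ∀ l ∈ L, l * c = c * l)
    {P : B → B} (hP : IsOp (L : Set B) P) {s : Set B} (hs : ∀ x ∈ s, P x = 0) {y : B}
    (hy : y ∈ Submodule.span C s) : P y = 0 := by
  induction hy using Submodule.span_induction with
  | mem x hx => exact hs x hx
  | zero => exact hP.map_zero
  | add x y _ _ hx hy => rw [hP.map_add, hx, hy, add_zero]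
  | smul a x _ hx =>
    rw [show a • x = (a : B) * x from rfl, hP.map_smul _ _ ((hC a).1 a.2), hx, mul_zero]

theorem density (L : Subring B) (C : Subfield B) (hC : ∀ c, c ∈ C ↔ ∀ l ∈ L, l * c = c * l)
    (s : Finset B) : ∀ y : B, y ∉ Submodule.span C (s : Set B) →
      ∃ P, IsOp (L : Set B) P ∧ (∀ x ∈ s, P x = 0) ∧ P y = 1 := by
  classical
  induction s using Finset.induction_on with
  | empty =>
    intro y hy
    refine ⟨_, IsOp.step _ 1 y⁻¹ IsOp.zero L.one_mem, by simp, ?_⟩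
    have : y ≠ 0 := by rintro rfl; simp at hy
    simp [this]
  | insert x1 s hx1 ih =>
    intro y hy
    have hy' : y ∉ Submodule.span C (s : Set B) := fun h =>
      hy (Submodule.span_mono (by simp) h)
    by_cases h1 : x1 ∈ Submodule.span C (s : Set B)
    · obtain ⟨P, hP, hPs, hPy⟩ := ih y hy'
      refine ⟨P, hP, ?_, hPy⟩
      intro x hx
      rcases Finset.mem_insert.1 hx with rfl | hx
      · exact hP.map_span hC (s := s) (by simpa using hPs) h1
      · exact hPs x hx
    · by_contra hcon
      have key : ∀ P, IsOp (L : Set B) P → (∀ x ∈ s, P x = 0) → P x1 = 0 → P y = 0 := by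
        intro P hP hPs hPx
        by_contra hPy
        refine hcon ⟨_, hP.mul_right (P y)⁻¹, ?_, by simp [hPy]⟩
        intro x hx
        rcases Finset.mem_insert.1 hx with rfl | hx
        · simp [hPx]
        · simp [hPs x hx]
      obtain ⟨P1, hP1, hP1s, hP1x⟩ := ih x1 h1
      have hc : P1 y ∈ C := by
        rw [hC]
        intro l hl
        have := key _ ((hP1.mul_left l hl).sub (hP1.mul_right l))
          (by intro x hx; simp [hP1s x hx]) (by simp [hP1x])
        exact sub_eq_zero.1 this
      have h2 : y - P1 y * x1 ∉ Submodule.span C (s : Set B) := by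
        intro h
        apply hy
        have e1 : (y - P1 y * x1) ∈ Submodule.span C ((insert x1 s : Finset B) : Set B) :=
          Submodule.span_mono (by simp) h
        have e2 : x1 ∈ Submodule.span C ((insert x1 s : Finset B) : Set B) :=
          Submodule.subset_span (by simp)
        have e3 := Submodule.smul_mem _ (⟨P1 y, hc⟩ : C) e2
        have e4 := Submodule.add_mem _ e1 e3
        have : y - P1 y * x1 + (⟨P1 y, hc⟩ : C) • x1 = y := by
          rw [show (⟨P1 y, hc⟩ : C) • x1 = P1 y * x1 from rfl]; abel
        rwa [this] at e4
      obtain ⟨P2, hP2, hP2s, hP2y⟩ := ih _ h2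
      have := key _ (hP2.sub (hP1.mul_right (P2 x1)))
        (by intro x hx; simp [hP1s x hx, hP2s x hx]) (by simp [hP1x])
      have h4 : P2 y = P2 (y - P1 y * x1) + P1 y * P2 x1 := by
        rw [← hP2.map_smul _ _ ((hC _).1 hc), ← hP2.map_add]; congr 1; abel
      rw [h4, hP2y] at this
      simp at this

theorem dual_ops (L : Subring B) (C : Subfield B) (hC : ∀ c, c ∈ C ↔ ∀ l ∈ L, l * c = c * l)
    {ι : Type*} [Finite ι] [DecidableEq ι] (x : ι → B) (hx : LinearIndependent C x) :
    ∃ P : ι → B → B, (∀ i, IsOp (L : Set B) (P i)) ∧ ∀ i j, P i (x j) = if i = j then 1 else 0 := by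
  classical
  have := Fintype.ofFinite ι
  have : ∀ i, ∃ P, IsOp (L : Set B) P ∧ ∀ j, P (x j) = if i = j then 1 else 0 := by
    intro i
    have h := hx.notMem_span_image (s := {i}ᶜ) (x := i) (by simp)
    obtain ⟨P, hP, h1, h2⟩ := density L C hC ((Finset.univ.erase i).image x) (x i) (by
      convert h using 3
      ext; simp)
    refine ⟨P, hP, fun j => ?_⟩
    split_ifs with hij
    · rw [← hij, h2]
    · exact h1 _ (Finset.mem_image_of_mem _ (by simpa using Ne.symm hij))
  choose P hP using this
  exact ⟨P, fun i => (hP i).1, fun i => (hP i).2⟩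

lemma matrix_le {m n : ℕ} (f : Matrix (Fin m) (Fin n) B) (g : Matrix (Fin n) (Fin m) B)
    (h : f * g = 1) : m ≤ n :=
  (rankCondition_iff_matrix.1 (inferInstance : RankCondition B)) _ _ g f h

/-- `[B : C] ≤ [L : K]`. -/
theorem le_of_span_left (L : Subring B) (K C : Subfield B)
    (hC : ∀ c, c ∈ C ↔ ∀ l ∈ L, l * c = c * l) (hK : ∀ c, c ∈ K ↔ ∀ b, b * c = c * b)
    {N d : ℕ} (y : Fin N → B) (hy : LinearIndependent C y) (l : Fin d → B)
    (hl : ∀ x ∈ L, ∃ c : Fin d → B, (∀ i, c i ∈ K) ∧ x = ∑ i, c i * l i) : N ≤ d := by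
  obtain ⟨P, hP, hPy⟩ := dual_ops L C hC y hy
  have key : ∀ P, IsOp (L : Set B) P → ∃ r : Fin d → B, ∀ x, P x = ∑ k, l k * x * r k := by
    intro P hP
    induction hP with
    | zero => exact ⟨0, by simp⟩
    | step P a r hP ha ih =>
      obtain ⟨r', hr'⟩ := ih
      obtain ⟨c, hc, rfl⟩ := hl a ha
      refine ⟨fun k => r' k + c k * r, fun x => ?_⟩
      simp only [hr', mul_add, Finset.sum_add_distrib, Finset.sum_mul]
      congr 1
      refine Finset.sum_congr rfl fun k _ => ?_
      have := (hK _).1 (hc k)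
      rw [← mul_assoc (l k * x), this (l k * x)]
      simp only [mul_assoc]
  choose r hr using fun i => key (P i) (hP i)
  refine matrix_le (Matrix.of fun i k => l k * y i) (Matrix.of fun k i => r i k) ?_
  ext i j
  rw [Matrix.mul_apply, Matrix.one_apply]
  have := hPy j i
  rw [hr] at this
  simpa [eq_comm] using this

/-- `[L : K] ≤ [B : C]`. -/
theorem le_of_span_right (K C : Subfield B) (hK : ∀ c, c ∈ K ↔ ∀ b, b * c = c * b)
    {N d : ℕ} (l : Fin d → B) (hl : LinearIndependent K l) (hlC : ∀ i, ∀ c ∈ C, l i * c = c * l i)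
    (b : Fin N → B)
    (hb : ∀ x, ∃ c : Fin N → B, (∀ i, c i ∈ C) ∧ x = ∑ i, c i * b i) : d ≤ N := by
  obtain ⟨P, hP, hPy⟩ := dual_ops ⊤ K (by simpa using hK) l hl
  have key : ∀ P, IsOp ((⊤ : Subring B) : Set B) P →
      ∃ r : Fin N → B, ∀ i, P (l i) = ∑ k, r k * (l i * b k) := by
    intro P hP
    induction hP with
    | zero => exact ⟨0, by simp⟩
    | step P a r hP ha ih =>
      obtain ⟨r', hr'⟩ := ih
      obtain ⟨c, hc, rfl⟩ := hb r
      refine ⟨fun k => r' k + a * c k, fun i => ?_⟩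
      simp only [hr', add_mul, Finset.sum_add_distrib, Finset.mul_sum]
      congr 1
      refine Finset.sum_congr rfl fun k _ => ?_
      have := hlC i _ (hc k)
      simp only [mul_assoc]
      rw [← mul_assoc (c k), ← this, mul_assoc]
  choose r hr using fun i => key (P i) (hP i)
  refine matrix_le (Matrix.of fun i k => r i k) (Matrix.of fun k i => l i * b k) ?_
  ext i j
  rw [Matrix.mul_apply, Matrix.one_apply]
  have := hPy i j
  rw [hr] at this
  simpa using this

end ops

end RRS
namespace RRS
section residue
universe u
variable {B : Type u} [DivisionRing B]

/-- ring of integers -/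
def OO (ρ : AbsoluteValue B ℝ) (hna : IsNonarchimedean ρ) : Subring B where
  carrier := {x | ρ x ≤ 1}
  mul_mem' {a b} ha hb := by
    simp only [Set.mem_ofPred_eq] at *
    rw [map_mul]; exact mul_le_one₀ ha (ρ.nonneg _) hb
  one_mem' := by simp
  add_mem' {a b} ha hb := (hna a b).trans (max_le ha hb)
  zero_mem' := by simp
  neg_mem' {a} ha := by simpa using ha

lemma mem_OO {ρ : AbsoluteValue B ℝ} {hna : IsNonarchimedean ρ} {x : B} :
    x ∈ OO ρ hna ↔ ρ x ≤ 1 := Iff.rfl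

/-- maximal ideal -/
def mm (ρ : AbsoluteValue B ℝ) (hna : IsNonarchimedean ρ) : Ideal (OO ρ hna) where
  carrier := {x | ρ (x : B) < 1}
  add_mem' {a b} ha hb := lt_of_le_of_lt (hna a b) (max_lt ha hb)
  zero_mem' := by simp
  smul_mem' c x hx := by
    simp only [Set.mem_ofPred_eq, smul_eq_mul, Subring.coe_mul, map_mul] at *
    exact lt_of_le_of_lt (mul_le_of_le_one_left (ρ.nonneg _) c.2) hx

lemma mem_mm {ρ : AbsoluteValue B ℝ} {hna : IsNonarchimedean ρ} {x : OO ρ hna} :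
    x ∈ mm ρ hna ↔ ρ (x : B) < 1 := Iff.rfl

instance (ρ : AbsoluteValue B ℝ) (hna : IsNonarchimedean ρ) : (mm ρ hna).IsTwoSided where
  mul_mem_of_left {a} b ha := by
    simp only [mem_mm, Subring.coe_mul, map_mul] at *
    exact lt_of_le_of_lt (mul_le_of_le_one_right (ρ.nonneg _) b.2) ha

lemma rho_inv_le (ρ : AbsoluteValue B ℝ) {x : B} (h : ρ x = 1) : ρ x⁻¹ = 1 := by
  have : x ≠ 0 := by rintro rfl; simp at h
  have := map_mul ρ x x⁻¹
  rw [mul_inv_cancel₀ ‹_›, h] at this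
  simpa using this.symm

theorem resCard_univ_finite {ρ : AbsoluteValue B ℝ} (hna : IsNonarchimedean ρ)
    (h : resCard ρ (Set.univ : Set B) ≠ 0) : Finite (OO ρ hna ⧸ mm ρ hna) := by
  have h1 := Nat.finite_of_card_ne_zero h
  let g : (Quot (fun x y : {b : B // b ∈ (Set.univ : Set B) ∧ ρ b ≤ 1} => ρ (x.1 - y.1) < 1)) →
      OO ρ hna ⧸ mm ρ hna := Quot.lift (fun x => Ideal.Quotient.mk _ ⟨x.1, x.2.2⟩) (by
        intro a b hab
        rw [Ideal.Quotient.mk_eq_mk_iff_sub_mem]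
        exact hab)
  refine Finite.of_surjective g ?_
  intro y
  obtain ⟨y, rfl⟩ := Ideal.Quotient.mk_surjective y
  exact ⟨Quot.mk _ ⟨y.1, trivial, y.2⟩, rfl⟩

/-- residue field package -/
theorem exists_residue {ρ : AbsoluteValue B ℝ} (hna : IsNonarchimedean ρ)
    (h : resCard ρ (Set.univ : Set B) ≠ 0) :
    ∃ (k : Type u) (_ : Field k) (_ : Finite k) (res : OO ρ hna →+* k),
      Function.Surjective res ∧ ∀ x, res x = 0 ↔ ρ (x : B) < 1 := by
  classical
  have hfin := resCard_univ_finite hna h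
  have hnt : Nontrivial (OO ρ hna ⧸ mm ρ hna) := by
    refine ⟨⟨Ideal.Quotient.mk _ 0, Ideal.Quotient.mk _ 1, ?_⟩⟩
    rw [Ne, Ideal.Quotient.mk_eq_mk_iff_sub_mem, mem_mm]
    simp
  have hu : ∀ a : OO ρ hna ⧸ mm ρ hna, IsUnit a ∨ a = 0 := by
    intro a
    obtain ⟨a, rfl⟩ := Ideal.Quotient.mk_surjective a
    by_cases ha : ρ (a : B) < 1
    · right; exact Ideal.Quotient.eq_zero_iff_mem.2 ha
    · left
      have h1 : ρ (a : B) = 1 := le_antisymm a.2 (not_lt.1 ha)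
      have hne : (a : B) ≠ 0 := by rintro h; simp [h] at h1
      let b : OO ρ hna := ⟨(a : B)⁻¹, (rho_inv_le ρ h1).le⟩
      have e1 : a * b = 1 := Subtype.ext (mul_inv_cancel₀ hne)
      have e2 : b * a = 1 := Subtype.ext (inv_mul_cancel₀ hne)
      exact ⟨⟨Ideal.Quotient.mk _ a, Ideal.Quotient.mk _ b, by rw [← map_mul, e1, map_one],
        by rw [← map_mul, e2, map_one]⟩, rfl⟩
  let _ := DivisionRing.ofIsUnitOrEqZero hu
  exact ⟨OO ρ hna ⧸ mm ρ hna, inferInstance, hfin, Ideal.Quotient.mk _, Ideal.Quotient.mk_surjective,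
    fun x => by rw [Ideal.Quotient.eq_zero_iff_mem, mem_mm]⟩

variable {ρ : AbsoluteValue B ℝ} {hna : IsNonarchimedean ρ} {k : Type u} [Field k]
  (res : OO ρ hna →+* k)

/-- residue field of a subfield -/
def resSub (hres : ∀ x, res x = 0 ↔ ρ (x : B) < 1) (S : Subfield B) : Subfield k where
  carrier := {a | ∃ x : OO ρ hna, (x : B) ∈ S ∧ res x = a}
  mul_mem' := by
    rintro _ _ ⟨x, hx, rfl⟩ ⟨y, hy, rfl⟩
    exact ⟨x * y, S.mul_mem hx hy, map_mul _ _ _⟩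
  one_mem' := ⟨1, S.one_mem, map_one _⟩
  add_mem' := by
    rintro _ _ ⟨x, hx, rfl⟩ ⟨y, hy, rfl⟩
    exact ⟨x + y, S.add_mem hx hy, map_add _ _ _⟩
  zero_mem' := ⟨0, S.zero_mem, map_zero _⟩
  neg_mem' := by
    rintro _ ⟨x, hx, rfl⟩
    exact ⟨-x, S.neg_mem hx, map_neg _ _⟩
  inv_mem' := by
    rintro _ ⟨x, hx, rfl⟩
    by_cases h0 : res x = 0
    · exact ⟨0, S.zero_mem, by simp [h0]⟩
    · have h1 : ρ (x : B) = 1 := le_antisymm x.2 (not_lt.1 (fun h => h0 ((hres x).2 h)))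
      have hne : (x : B) ≠ 0 := by rintro h; simp [h] at h1
      refine ⟨⟨(x : B)⁻¹, (rho_inv_le ρ h1).le⟩, S.inv_mem hx, ?_⟩
      refine eq_inv_of_mul_eq_one_left ?_
      rw [← map_mul, ← map_one res]
      congr 1
      exact Subtype.ext (inv_mul_cancel₀ hne)

variable {res} (hres : ∀ x, res x = 0 ↔ ρ (x : B) < 1)

lemma mem_resSub {S : Subfield B} {a : k} :
    a ∈ resSub res hres S ↔ ∃ x : OO ρ hna, (x : B) ∈ S ∧ res x = a := Iff.rfl

lemma resSub_mono {S T : Subfield B} (h : S ≤ T) : resSub res hres S ≤ resSub res hres T := by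
  rintro _ ⟨x, hx, rfl⟩
  exact ⟨x, h hx, rfl⟩

lemma res_eq_iff (hres : ∀ x, res x = 0 ↔ ρ (x : B) < 1) (x y : OO ρ hna) :
    res x = res y ↔ ρ ((x : B) - y) < 1 := by
  rw [← sub_eq_zero, ← map_sub, hres]; rfl

lemma resCard_eq (S : Subfield B) :
    resCard ρ (S : Set B) = Nat.card (resSub res hres S) := by
  let g : (Quot (fun x y : {b : B // b ∈ (S : Set B) ∧ ρ b ≤ 1} => ρ (x.1 - y.1) < 1)) →
      resSub res hres S := Quot.lift (fun x => ⟨res ⟨x.1, x.2.2⟩, ⟨_, x.2.1, rfl⟩⟩) (by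
        intro a b hab
        refine Subtype.ext ?_
        exact (res_eq_iff hres _ _).2 hab)
  refine Nat.card_congr (Equiv.ofBijective g ⟨?_, ?_⟩)
  · intro a b hab
    induction a using Quot.ind with | _ a
    induction b using Quot.ind with | _ b
    have h1 := congrArg Subtype.val hab
    exact Quot.sound ((res_eq_iff hres _ _).1 h1)
  · rintro ⟨_, x, hx, rfl⟩
    exact ⟨Quot.mk _ ⟨x.1, hx, x.2⟩, rfl⟩

/-- basis of a subfield over another one, inside a finite field -/
lemma subfield_basis [Finite k] (F E : Subfield k) (hFE : F ≤ E) {f : ℕ}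
    (hcard : Nat.card E = Nat.card F ^ f) :
    ∃ v : Fin f → k, (∀ i, v i ∈ E) ∧ LinearIndependent F v ∧
      ∀ a ∈ E, ∃ c : Fin f → F, a = ∑ i, (c i : k) * v i := by
  let V : Submodule F k :=
    { carrier := E
      add_mem' := E.add_mem
      zero_mem' := E.zero_mem
      smul_mem' := fun c x hx => E.mul_mem (hFE c.2) hx }
  have h1 := Module.natCard_eq_pow_finrank (K := F) (V := V)
  have h2 : Nat.card V = Nat.card E := rfl
  have h3 : 1 < Nat.card F := Finite.one_lt_card
  have h4 : Module.finrank F V = f := by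
    rw [h2, hcard] at h1
    exact (Nat.pow_right_injective h3 h1).symm
  let b := Module.finBasisOfFinrankEq F V h4
  refine ⟨fun i => b i, fun i => (b i).2, ?_, ?_⟩
  · exact b.linearIndependent.map' V.subtype (Submodule.ker_subtype V)
  · intro a ha
    refine ⟨b.repr ⟨a, ha⟩, ?_⟩
    have := congrArg Subtype.val (b.sum_repr ⟨a, ha⟩)
    refine Eq.trans this.symm ?_
    rw [Submodule.coe_sum]
    rfl

lemma subfield_card [Finite k] (F E : Subfield k) (hFE : F ≤ E) :
    ∃ f, Nat.card E = Nat.card F ^ f := by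
  let V : Submodule F k :=
    { carrier := E
      add_mem' := E.add_mem
      zero_mem' := E.zero_mem
      smul_mem' := fun c x hx => E.mul_mem (hFE c.2) hx }
  exact ⟨_, Module.natCard_eq_pow_finrank (K := F) (V := V)⟩

end residue
end RRS
namespace RRS
section valuation
universe u
variable {B : Type u} [DivisionRing B]

lemma sum_le {ρ : AbsoluteValue B ℝ} (hna : IsNonarchimedean ρ) {ι : Type*} (s : Finset ι)
    (f : ι → B) {M : ℝ} (hM : 0 ≤ M) (h : ∀ i ∈ s, ρ (f i) ≤ M) : ρ (∑ i ∈ s, f i) ≤ M := by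
  classical
  induction s using Finset.induction_on with
  | empty => simpa
  | insert a s ha ih =>
    rw [Finset.sum_insert ha]
    exact (hna _ _).trans (max_le (h _ (by simp)) (ih fun i hi => h i (by simp [hi])))

lemma sum_lt {ρ : AbsoluteValue B ℝ} (hna : IsNonarchimedean ρ) {ι : Type*} (s : Finset ι)
    (f : ι → B) {M : ℝ} (hM : 0 < M) (h : ∀ i ∈ s, ρ (f i) < M) : ρ (∑ i ∈ s, f i) < M := by
  classical
  induction s using Finset.induction_on with
  | empty => simpa
  | insert a s ha ih =>
    rw [Finset.sum_insert ha]
    exact (hna _ _).trans_lt (max_lt (h _ (by simp)) (ih fun i hi => h i (by simp [hi])))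

lemma sub_le {ρ : AbsoluteValue B ℝ} (hna : IsNonarchimedean ρ) (x y : B) :
    ρ (x - y) ≤ max (ρ x) (ρ y) := by
  have := hna x (-y)
  rwa [← sub_eq_add_neg, map_neg_eq_map] at this

lemma distinct_zero {ρ : AbsoluteValue B ℝ} (hna : IsNonarchimedean ρ) {ι : Type*} [Fintype ι]
    (f : ι → B) (h0 : ∑ i, f i = 0)
    (hd : ∀ i j, i ≠ j → f i ≠ 0 → f j ≠ 0 → ρ (f i) ≠ ρ (f j)) : ∀ i, f i = 0 := by
  classical
  intro i'
  obtain ⟨i, -, hi⟩ := Finset.exists_max_image Finset.univ (fun i => ρ (f i)) ⟨i', by simp⟩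
  by_cases hi0 : f i = 0
  · have := hi i' (by simp)
    simp only [hi0, map_zero] at this
    exact (map_eq_zero ρ).1 (le_antisymm this (ρ.nonneg _))
  · exfalso
    have h1 : f i + ∑ j ∈ Finset.univ.erase i, f j = 0 := by
      rw [Finset.add_sum_erase _ _ (by simp), h0]
    have h2 : ρ (∑ j ∈ Finset.univ.erase i, f j) < ρ (f i) := by
      refine sum_lt hna _ _ (ρ.pos hi0) fun j hj => ?_
      by_cases hj0 : f j = 0
      · simpa [hj0] using hi0
      · exact lt_of_le_of_ne (hi j (by simp)) (hd _ _ (by simpa using hj) hj0 hi0)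
    rw [eq_neg_of_add_eq_zero_left h1, map_neg_eq_map] at h2
    exact lt_irrefl _ h2

lemma value_group {ρ : AbsoluteValue B ℝ} (S : Subfield B) (π : B) (hπS : π ∈ S)
    (hπ : 0 < ρ π ∧ ρ π < 1 ∧ ∀ x ∈ S, ρ x < 1 → ρ x ≤ ρ π) (x : B) (hx : x ∈ S) (hx0 : x ≠ 0) :
    ∃ k : ℤ, ρ x = ρ π ^ k := by
  obtain ⟨h0, h1, h2⟩ := hπ
  obtain ⟨k, hk1, hk2⟩ := exists_mem_Ico_zpow (x := ρ x) (y := (ρ π)⁻¹) (ρ.pos hx0)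
    ((one_lt_inv₀ h0).2 h1)
  refine ⟨-k, ?_⟩
  have hw : ρ (x * π ^ k) = ρ x * ρ π ^ k := by simp
  have hpos : 0 < ρ π ^ k := zpow_pos h0 k
  have hwS : x * π ^ k ∈ S := S.mul_mem hx (S.zpow_mem hπS k)
  rw [inv_zpow, inv_le_iff_one_le_mul₀ hpos] at hk1
  rw [zpow_add_one₀ (by positivity), inv_zpow, ← div_eq_inv_mul, lt_div_iff₀ hpos] at hk2
  rw [zpow_neg]
  refine eq_inv_of_mul_eq_one_left ?_
  by_contra hne
  have hlt : 1 < ρ x * ρ π ^ k := lt_of_le_of_ne hk1 (Ne.symm hne)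
  have := h2 _ (S.inv_mem hwS) (by rw [map_inv₀, hw]; exact inv_lt_one_of_one_lt₀ hlt)
  rw [map_inv₀, hw] at this
  have h3 := inv_anti₀ (by positivity) this
  rw [inv_inv] at h3
  linarith

lemma op_bound {ρ : AbsoluteValue B ℝ} {L : Set B} {P : B → B} (hP : IsOp L P) :
    ∃ M : ℝ, 0 < M ∧ ∀ x, ρ (P x) ≤ M * ρ x := by
  induction hP with
  | zero => exact ⟨1, one_pos, fun x => by simp⟩
  | step P l r hP hl ih =>
    obtain ⟨M, hM, h⟩ := ih
    refine ⟨M + ρ l * ρ r, by positivity, fun x => ?_⟩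
    refine (ρ.add_le _ _).trans ?_
    simp only [map_mul]
    nlinarith [h x]

variable {ρ : AbsoluteValue B ℝ} {hna : IsNonarchimedean ρ} {k : Type u} [Field k]
  {res : OO ρ hna →+* k} (hres : ∀ x, res x = 0 ↔ ρ (x : B) < 1)

include hres in
/-- leading term of a combination of lifts of residually independent elements -/
lemma lead (S : Subfield B) {f : ℕ} (b : Fin f → OO ρ hna)
    (hb : LinearIndependent (resSub res hres S) (fun i => res (b i)))
    (s : Fin f → S) (hs : s ≠ 0) :
    ∃ i, s i ≠ 0 ∧ ρ (∑ i, (s i : B) * b i) = ρ (s i : B) := by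
  obtain ⟨i', hi'⟩ := Function.ne_iff.1 hs
  obtain ⟨i, -, hi⟩ := Finset.exists_max_image Finset.univ (fun i => ρ (s i : B)) ⟨i', by simp⟩
  have hi0 : (s i : B) ≠ 0 := by
    intro h
    have := hi i' (by simp)
    simp only [h, map_zero] at this
    have h2 := (map_eq_zero ρ).1 (le_antisymm this (ρ.nonneg _))
    exact hi' (Subtype.ext h2)
  refine ⟨i, fun h => hi0 (by simp [h]), ?_⟩
  have hpos := ρ.pos hi0
  let t : Fin f → OO ρ hna := fun j => ⟨(s i : B)⁻¹ * s j, by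
    rw [mem_OO, map_mul, map_inv₀, inv_mul_le_iff₀ hpos, mul_one]; exact hi j (by simp)⟩
  have htS : ∀ j, (t j : B) ∈ S := fun j => S.mul_mem (S.inv_mem (s i).2) (s j).2
  have ht : ρ ((∑ j, t j * b j : OO ρ hna) : B) = 1 := by
    refine le_antisymm (∑ j, t j * b j : OO ρ hna).2 (not_lt.1 fun hlt => ?_)
    rw [← hres, map_sum] at hlt
    have := Fintype.linearIndependent_iff.1 hb (fun j => ⟨res (t j), t j, htS j, rfl⟩)
      (by simpa [Subfield.smul_def] using hlt) i
    have h1 : t i = 1 := Subtype.ext (inv_mul_cancel₀ hi0)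
    have := congrArg Subtype.val this
    simp [h1] at this
  have : (∑ j, (s j : B) * b j) = (s i : B) * ((∑ j, t j * b j : OO ρ hna) : B) := by
    push_cast
    rw [Finset.mul_sum]
    refine Finset.sum_congr rfl fun j _ => ?_
    simp only [t]
    rw [← mul_assoc, mul_inv_cancel_left₀ hi0]
  rw [this, map_mul, ht, mul_one]

include hres in
/-- `e f ≤ [B : S]` -/
theorem lower (S : Subfield B) (πS π : B) (hπS : πS ∈ S)
    (hπ : 0 < ρ πS ∧ ρ πS < 1 ∧ ∀ x ∈ S, ρ x < 1 → ρ x ≤ ρ πS) (h0 : 0 < ρ π) (h1 : ρ π < 1)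
    {e : ℕ} (he : ρ πS = ρ π ^ e) {f : ℕ} (b : Fin f → OO ρ hna)
    (hb : LinearIndependent (resSub res hres S) (fun i => res (b i))) :
    LinearIndependent S (fun p : Fin f × Fin e => (b p.1 : B) * π ^ (p.2 : ℕ)) := by
  rw [Fintype.linearIndependent_iff]
  intro g hg
  rw [Fintype.sum_prod_type_right] at hg
  have hg' : ∑ j : Fin e, (∑ i, (g (i, j) : B) * b i) * π ^ (j : ℕ) = 0 := by
    rw [← hg]
    refine Finset.sum_congr rfl fun j _ => ?_
    rw [Finset.sum_mul]
    exact Finset.sum_congr rfl fun i _ => by simp [Subfield.smul_def, mul_assoc]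
  have hval : ∀ j : Fin e, (∑ i, (g (i, j) : B) * b i) ≠ 0 →
      ∃ m : ℤ, ρ ((∑ i, (g (i, j) : B) * b i) * π ^ (j : ℕ)) = ρ π ^ ((e : ℤ) * m + j) := by
    intro j hj
    have hs : (fun i => g (i, j)) ≠ 0 := by
      intro h
      apply hj
      refine Finset.sum_eq_zero fun i _ => ?_
      have := congrFun h i
      simp only [Pi.zero_apply] at this
      simp [this]
    obtain ⟨i, hi, hi'⟩ := lead hres S b hb (fun i => g (i, j)) hs
    obtain ⟨m, hm⟩ := value_group S πS hπS hπ (g (i, j)) (g (i, j)).2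
      (fun h => hi (Subtype.ext h))
    refine ⟨m, ?_⟩
    rw [map_mul, hi', hm, he, map_pow, zpow_add₀ h0.ne', zpow_mul]
    simp
  have hz := distinct_zero hna _ hg' (by
    intro i j hij hi hj heq
    obtain ⟨m, hm⟩ := hval i (left_ne_zero_of_mul hi)
    obtain ⟨m', hm'⟩ := hval j (left_ne_zero_of_mul hj)
    rw [hm, hm'] at heq
    have h3 := (zpow_right_injective₀ h0 h1.ne) heq
    apply hij
    have h4 := congrArg (· % (e : ℤ)) h3
    simp only [Int.mul_add_emod_self_left] at h4
    rw [Int.emod_eq_of_lt (by positivity) (by exact_mod_cast i.2),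
      Int.emod_eq_of_lt (by positivity) (by exact_mod_cast j.2)] at h4
    exact Fin.ext (by exact_mod_cast h4))
  rintro ⟨i, j⟩
  by_contra hij
  have hs : (fun i => g (i, j)) ≠ 0 := by
    intro h
    exact hij (congrFun h i)
  obtain ⟨i2, hi, hi'⟩ := lead hres S b hb (fun i => g (i, j)) hs
  have h5 : (∑ i, (g (i, j) : B) * b i) = 0 := by
    have := hz j
    have hp : π ^ (j : ℕ) ≠ 0 := pow_ne_zero _ (by rintro rfl; simp at h0)
    exact (mul_eq_zero.1 this).resolve_right hp
  rw [h5, map_zero] at hi'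
  exact hi (Subtype.ext ((map_eq_zero ρ).1 hi'.symm))

include hres in
lemma approx_step (K L : Subfield B) (hKL : K ≤ L) (hK : ∀ c, c ∈ K ↔ ∀ b, b * c = c * b)
    (πK πL : B) (hπKm : πK ∈ K) (hπLm : πL ∈ L)
    (hπ : 0 < ρ πL ∧ ρ πL < 1 ∧ ∀ x ∈ L, ρ x < 1 → ρ x ≤ ρ πL)
    {e : ℕ} (he0 : 0 < e) (he : ρ πK = ρ πL ^ e) {f : ℕ} (b : Fin f → OO ρ hna)
    (hbL : ∀ i, (b i : B) ∈ L)
    (hb : ∀ a ∈ resSub res hres L, ∃ c : Fin f → resSub res hres K, a = ∑ i, (c i : k) * res (b i))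
    (x : B) (hx : x ∈ L) :
    ∃ c : Fin f × Fin e → K,
      ρ (x - ∑ p, (c p : B) * ((b p.1 : B) * πL ^ (p.2 : ℕ))) ≤ ρ πL * ρ x := by
  by_cases hx0 : x = 0
  · exact ⟨0, by simp [hx0]⟩
  obtain ⟨m, hm⟩ := value_group L πL hπLm hπ x hx hx0
  have hπL0 : πL ≠ 0 := by rintro rfl; simp at hπ
  have hπK0 : πK ≠ 0 := by
    rintro rfl
    rw [map_zero] at he
    exact (pow_pos hπ.1 e).ne he
  have hmod : 0 ≤ m % (e : ℤ) := Int.emod_nonneg _ (by exact_mod_cast he0.ne')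
  have hmod2 : m % (e : ℤ) < e := Int.emod_lt_of_pos _ (by exact_mod_cast he0)
  obtain ⟨j, hj⟩ : ∃ j : Fin e, ((j : ℕ) : ℤ) = m % e :=
    ⟨⟨(m % e).toNat, by omega⟩, by simp [hmod]⟩
  set w : B := πK ^ (m / e) with hw
  have hwK : w ∈ K := K.zpow_mem hπKm _
  have hw0 : w ≠ 0 := zpow_ne_zero _ hπK0
  have hval : ρ (w * πL ^ (j : ℕ)) = ρ x := by
    rw [hm, hw, map_mul, map_zpow₀, he, map_pow, ← zpow_natCast (ρ πL) e, ← zpow_mul,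
      ← zpow_natCast, ← zpow_add₀ hπ.1.ne', hj, Int.mul_ediv_add_emod]
  have hwp0 : w * πL ^ (j : ℕ) ≠ 0 := mul_ne_zero hw0 (pow_ne_zero _ hπL0)
  have hwL : w * πL ^ (j : ℕ) ∈ L := L.mul_mem (hKL hwK) (L.pow_mem hπLm _)
  let u : OO ρ hna := ⟨x * (w * πL ^ (j : ℕ))⁻¹, by
    rw [mem_OO, map_mul, map_inv₀, hval, mul_inv_cancel₀ (ρ.pos hx0).ne']⟩
  have huL : (u : B) ∈ L := L.mul_mem hx (L.inv_mem hwL)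
  obtain ⟨c, hc⟩ := hb (res u) ⟨u, huL, rfl⟩
  choose t ht ht' using fun i => (c i).2
  have hlt : ρ ((u : B) - ((∑ i, t i * b i : OO ρ hna) : B)) < 1 := by
    rw [← res_eq_iff hres, hc, map_sum]
    simp [ht']
  have hle := hπ.2.2 _ (L.sub_mem huL (by
    push_cast
    exact L.sum_mem fun i _ => L.mul_mem (hKL (ht i)) (hbL i))) hlt
  refine ⟨fun p => if p.2 = j then ⟨t p.1 * w, K.mul_mem (ht _) hwK⟩ else 0, ?_⟩
  have heq : x - ∑ p : Fin f × Fin e,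
      (((if p.2 = j then ⟨t p.1 * w, K.mul_mem (ht _) hwK⟩ else 0 : K) : B)) *
        ((b p.1 : B) * πL ^ (p.2 : ℕ))
      = ((u : B) - ((∑ i, t i * b i : OO ρ hna) : B)) * (w * πL ^ (j : ℕ)) := by
    rw [sub_mul]
    congr 1
    · simp only [u]; rw [inv_mul_cancel_right₀ hwp0]
    · rw [Fintype.sum_prod_type]
      push_cast
      rw [Finset.sum_mul]
      refine Finset.sum_congr rfl fun i _ => ?_
      rw [Finset.sum_eq_single j]
      · simp only [if_true]
        rw [mul_assoc, mul_assoc, ← mul_assoc w, ← mul_assoc (b i : B) w, (hK w).1 hwK (b i)]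
      · intro j' _ hj'
        simp [hj']
      · simp
  rw [heq, map_mul, hval]
  exact mul_le_mul_of_nonneg_right hle (ρ.nonneg _)

include hres in
lemma approx (K L : Subfield B) (hKL : K ≤ L) (hK : ∀ c, c ∈ K ↔ ∀ b, b * c = c * b)
    (πK πL : B) (hπKm : πK ∈ K) (hπLm : πL ∈ L)
    (hπ : 0 < ρ πL ∧ ρ πL < 1 ∧ ∀ x ∈ L, ρ x < 1 → ρ x ≤ ρ πL)
    {e : ℕ} (he0 : 0 < e) (he : ρ πK = ρ πL ^ e) {f : ℕ} (b : Fin f → OO ρ hna)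
    (hbL : ∀ i, (b i : B) ∈ L)
    (hb : ∀ a ∈ resSub res hres L, ∃ c : Fin f → resSub res hres K, a = ∑ i, (c i : k) * res (b i))
    (x : B) (hx : x ∈ L) (t : ℕ) :
    ∃ c : Fin f × Fin e → K,
      ρ (x - ∑ p, (c p : B) * ((b p.1 : B) * πL ^ (p.2 : ℕ))) ≤ ρ πL ^ t * ρ x := by
  induction t with
  | zero => exact ⟨0, by simp⟩
  | succ t ih =>
    obtain ⟨c, hc⟩ := ih
    obtain ⟨c', hc'⟩ := approx_step hres K L hKL hK πK πL hπKm hπLm hπ he0 he b hbL hb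
      (x - ∑ p, (c p : B) * ((b p.1 : B) * πL ^ (p.2 : ℕ)))
      (L.sub_mem hx (L.sum_mem fun p _ => L.mul_mem (hKL (c p).2)
        (L.mul_mem (hbL _) (L.pow_mem hπLm _))))
    refine ⟨fun p => c p + c' p, ?_⟩
    have : x - ∑ p, ((c p + c' p : K) : B) * ((b p.1 : B) * πL ^ (p.2 : ℕ)) =
        x - ∑ p, (c p : B) * ((b p.1 : B) * πL ^ (p.2 : ℕ)) -
          ∑ p, (c' p : B) * ((b p.1 : B) * πL ^ (p.2 : ℕ)) := by
      simp only [Subfield.coe_add, add_mul, Finset.sum_add_distrib]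
      abel
    rw [this]
    refine hc'.trans ?_
    rw [pow_succ', mul_assoc]
    exact mul_le_mul_of_nonneg_left hc hπ.1.le

include hres in
/-- `[L : K] ≤ e f` -/
theorem upper (K L : Subfield B) (hKL : K ≤ L) (hK : ∀ c, c ∈ K ↔ ∀ b, b * c = c * b)
    (πK πL : B) (hπKm : πK ∈ K) (hπLm : πL ∈ L)
    (hπ : 0 < ρ πL ∧ ρ πL < 1 ∧ ∀ x ∈ L, ρ x < 1 → ρ x ≤ ρ πL)
    {e : ℕ} (he0 : 0 < e) (he : ρ πK = ρ πL ^ e) {f : ℕ} (b : Fin f → OO ρ hna)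
    (hbL : ∀ i, (b i : B) ∈ L)
    (hb : ∀ a ∈ resSub res hres L, ∃ c : Fin f → resSub res hres K, a = ∑ i, (c i : k) * res (b i))
    {N : ℕ} (x : Fin N → B) (hxL : ∀ i, x i ∈ L) (hx : LinearIndependent K x) : N ≤ f * e := by
  classical
  obtain ⟨P, hP, hPx⟩ := dual_ops ⊤ K (by simpa using hK) x hx
  choose M hM0 hM using fun i => op_bound (ρ := ρ) (hP i)
  by_contra hlt
  push Not at hlt
  -- bounds
  obtain ⟨X, hX0, hX⟩ : ∃ X : ℝ, 0 < X ∧ ∀ i, ρ (x i) ≤ X :=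
    ⟨1 + ∑ i, ρ (x i), by positivity, fun i => by
      have := Finset.single_le_sum (f := fun i => ρ (x i)) (fun i _ => ρ.nonneg _)
        (Finset.mem_univ i)
      linarith⟩
  obtain ⟨Y, hY0, hY⟩ : ∃ Y : ℝ, 0 < Y ∧ ∀ i, M i ≤ Y :=
    ⟨1 + ∑ i, M i, by have := Finset.sum_nonneg (s := Finset.univ) (fun i _ => (hM0 i).le); linarith, fun i => by
      have := Finset.single_le_sum (f := fun i => M i) (fun i _ => (hM0 i).le)
        (Finset.mem_univ i)
      linarith⟩
  obtain ⟨t, ht⟩ := exists_pow_lt_of_lt_one (show 0 < (Y * X)⁻¹ by positivity) hπ.2.1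
  choose c hc using fun i => approx hres K L hKL hK πK πL hπKm hπLm hπ he0 he b hbL hb
    (x i) (hxL i) t
  have hdep : ¬ LinearIndependent K c := by
    intro h
    have := h.fintype_card_le_finrank
    rw [Module.finrank_fintype_fun_eq_card] at this
    simp at this
    omega
  obtain ⟨a, ha, i', hi'⟩ := Fintype.not_linearIndependent_iff.1 hdep
  obtain ⟨i, -, hi⟩ := Finset.exists_max_image Finset.univ (fun i => ρ (a i : B)) ⟨i', by simp⟩
  have hi0 : 0 < ρ (a i : B) :=
    lt_of_lt_of_le (ρ.pos (fun h => hi' (Subtype.ext h))) (hi i' (by simp))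
  have hcomm : ∀ d : K, ∀ l ∈ ((⊤ : Subring B) : Set B), l * (d : B) = d * l := fun d l _ =>
    (hK d).1 d.2 l
  have h1 : P i (∑ j, (a j : B) * x j) = a i := by
    rw [(hP i).map_sum]
    simp_rw [(hP i).map_smul _ _ (hcomm _), hPx]
    simp
  have h2 : ∑ j, (a j : B) * x j =
      ∑ j, (a j : B) * (x j - ∑ p, (c j p : B) * ((b p.1 : B) * πL ^ (p.2 : ℕ))) := by
    simp only [mul_sub, Finset.sum_sub_distrib]
    rw [eq_comm, sub_eq_self]
    simp_rw [Finset.mul_sum]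
    rw [Finset.sum_comm]
    refine Finset.sum_eq_zero fun p _ => ?_
    simp_rw [← mul_assoc]
    have := congrArg Subtype.val (congrFun ha p)
    simp only [Finset.sum_apply, Pi.smul_apply, smul_eq_mul, Pi.zero_apply] at this
    push_cast at this
    simp only [← Finset.sum_mul, this, zero_mul]
  have h3 : ρ (∑ j, (a j : B) * x j) ≤ ρ (a i : B) * (ρ πL ^ t * X) := by
    rw [h2]
    refine sum_le hna _ _ (by positivity) fun j _ => ?_
    rw [map_mul]
    refine mul_le_mul (hi j (by simp)) ((hc j).trans ?_) (ρ.nonneg _) hi0.le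
    exact mul_le_mul_of_nonneg_left (hX j) (by positivity)
  have h4 : ρ (a i : B) ≤ Y * (ρ (a i : B) * (ρ πL ^ t * X)) := by
    conv_lhs => rw [← h1]
    refine (hM i _).trans ?_
    exact mul_le_mul (hY i) h3 (ρ.nonneg _) hY0.le
  have h5 : ρ πL ^ t * (Y * X) < 1 := by
    rwa [← one_div, lt_div_iff₀ (by positivity)] at ht
  nlinarith

end valuation
end RRS
namespace RRS
section frob
universe u
variable {B : Type u} [DivisionRing B]

lemma fin_of_bound {D V : Type*} [DivisionRing D] [AddCommGroup V] [Module D V] {n : ℕ}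
    (h : ∀ (N : ℕ) (x : Fin N → V), LinearIndependent D x → N ≤ n) :
    Module.Finite D V ∧ Module.finrank D V ≤ n := by
  have h1 : Module.rank D V ≤ n := by
    refine rank_le fun s hs => ?_
    exact h s.card (fun i => (s.equivFin.symm i : V)) (hs.comp _ s.equivFin.symm.injective)
  have h2 : Module.Finite D V :=
    Module.rank_lt_aleph0_iff.1 (lt_of_le_of_lt h1 (Cardinal.natCast_lt_aleph0))
  exact ⟨h2, Module.finrank_le_of_rank_le h1⟩

lemma exists_trace (K : Subfield B) (hK : ∀ c, c ∈ K ↔ ∀ b, b * c = c * b) [Module.Finite K B] :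
    ∃ P : B → B, IsOp ((⊤ : Subring B) : Set B) P ∧ (∀ x, P x ∈ K) ∧ P 1 = 1 := by
  classical
  let b := Module.finBasis K B
  obtain ⟨P, hP, hPb⟩ := dual_ops ⊤ K (by simpa using hK) b b.linearIndependent
  have hcomm : ∀ d : K, ∀ l ∈ ((⊤ : Subring B) : Set B), l * (d : B) = d * l := fun d l _ =>
    (hK d).1 d.2 l
  have hPi : ∀ i x, P i x = (b.repr x i : B) := by
    intro i x
    conv_lhs => rw [← b.sum_repr x]
    rw [(hP i).map_sum]
    simp_rw [Subfield.smul_def, smul_eq_mul, (hP i).map_smul _ _ (hcomm _), hPb]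
    simp
  have h1 : b.repr 1 ≠ 0 := by simp
  obtain ⟨i, hi⟩ := Finsupp.ne_iff.1 h1
  have hi' : P i 1 ≠ 0 := by
    rw [hPi]
    intro h
    exact hi (Subtype.ext h)
  refine ⟨_, (hP i).mul_right (P i 1)⁻¹, fun x => ?_, mul_inv_cancel₀ hi'⟩
  simp only [hPi]
  exact K.mul_mem (Subtype.mem _) (K.inv_mem (Subtype.mem _))

lemma op_central {ρ : AbsoluteValue B ℝ} {L : Set B} {P : B → B} (hP : IsOp L P) :
    ∃ M : ℝ, 0 < M ∧ ∀ z ε, (∀ x, ρ (x * z - z * x) ≤ ε * ρ x) → ρ (P z - z * P 1) ≤ M * ε := by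
  induction hP with
  | zero =>
    refine ⟨1, one_pos, fun z ε h => ?_⟩
    have := h 1
    simpa using this
  | step P l r hP hl ih =>
    obtain ⟨M, hM, h⟩ := ih
    refine ⟨M + ρ l * ρ r, by positivity, fun z ε hz => ?_⟩
    have e1 : P z + l * z * r - z * (P 1 + l * 1 * r) = (P z - z * P 1) + (l * z - z * l) * r := by
      noncomm_ring
    rw [e1]
    refine (ρ.add_le _ _).trans ?_
    rw [map_mul]
    have := mul_le_mul_of_nonneg_right (hz l) (ρ.nonneg r)
    have := h z ε hz
    nlinarith

lemma comm_pow {ρ : AbsoluteValue B ℝ} (hna : IsNonarchimedean ρ) {b : B} (hb : ρ b ≤ 1) {r : ℝ}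
    (hr : 0 ≤ r) (H : ∀ x, ρ (x * b - b * x) ≤ r * ρ x) (m : ℕ) (x : B) :
    ρ (x * b ^ (m + 1) - b ^ (m + 1) * x - ((m + 1 : ℕ) : B) * (b ^ m * (x * b - b * x)))
      ≤ r ^ 2 * ρ x := by
  have hpos : 0 ≤ r ^ 2 * ρ x := by positivity
  induction m with
  | zero => simpa using hpos
  | succ m ih =>
    set h := x * b - b * x with hh
    set E := x * b ^ (m + 1) - b ^ (m + 1) * x - ((m + 1 : ℕ) : B) * (b ^ m * h) with hE
    have e1 : x * b ^ (m + 1 + 1) - b ^ (m + 1 + 1) * x - ((m + 1 + 1 : ℕ) : B) * (b ^ (m + 1) * h)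
        = E * b + ((m + 1 : ℕ) : B) * (b ^ m * (h * b - b * h)) := by
      have e2 : x * b ^ (m + 1) = E + b ^ (m + 1) * x + ((m + 1 : ℕ) : B) * (b ^ m * h) := by
        rw [hE]; abel
      have e3 : x * b = h + b * x := by rw [hh]; abel
      rw [pow_succ b (m + 1), ← mul_assoc, e2, mul_assoc (b ^ (m + 1)) b x]
      have e4 : b * x = x * b - h := by rw [e3]; abel
      rw [e4]
      rw [Nat.cast_succ (m + 1)]
      rw [pow_succ b m]
      noncomm_ring
    rw [e1]
    refine (hna _ _).trans (max_le ?_ ?_)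
    · rw [map_mul]
      exact (mul_le_of_le_one_right (ρ.nonneg _) hb).trans ih
    · rw [map_mul, map_mul, map_pow]
      have c1 : ρ ((m + 1 : ℕ) : B) ≤ 1 := natCast_mem (OO ρ hna) (m + 1)
      have c2 : ρ b ^ m ≤ 1 := pow_le_one₀ (ρ.nonneg _) hb
      have c3 : ρ (h * b - b * h) ≤ r ^ 2 * ρ x := by
        refine (H h).trans ?_
        rw [pow_two, mul_assoc]
        exact mul_le_mul_of_nonneg_left (H x) hr
      refine (mul_le_of_le_one_left (by positivity) c1).trans ?_
      exact (mul_le_of_le_one_left (by positivity) c2).trans c3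

lemma comm_pow_le {ρ : AbsoluteValue B ℝ} (hna : IsNonarchimedean ρ) {b : B} (hb : ρ b ≤ 1)
    {r r0 : ℝ} (hr : 0 ≤ r) (hr0 : r ≤ r0) (H : ∀ x, ρ (x * b - b * x) ≤ r * ρ x) (Q : ℕ)
    (hQ0 : 0 < Q) (hQ : ρ (Q : B) ≤ r0) (x : B) :
    ρ (x * b ^ Q - b ^ Q * x) ≤ (r * r0) * ρ x := by
  obtain ⟨m, rfl⟩ := Nat.exists_eq_succ_of_ne_zero hQ0.ne'
  have h1 := comm_pow hna hb hr H m x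
  have e1 : x * b ^ (m + 1) - b ^ (m + 1) * x = (x * b ^ (m + 1) - b ^ (m + 1) * x -
    ((m + 1 : ℕ) : B) * (b ^ m * (x * b - b * x))) +
      ((m + 1 : ℕ) : B) * (b ^ m * (x * b - b * x)) := by abel
  rw [Nat.succ_eq_add_one, e1]
  refine (hna _ _).trans (max_le (h1.trans ?_) ?_)
  · rw [pow_two]
    exact mul_le_mul_of_nonneg_right (mul_le_mul_of_nonneg_left hr0 hr) (ρ.nonneg _)
  · rw [map_mul, map_mul, map_pow, mul_comm r r0, mul_assoc]
    refine mul_le_mul hQ ?_ (by positivity) (hr.trans hr0)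
    exact (mul_le_of_le_one_left (ρ.nonneg _) (pow_le_one₀ (ρ.nonneg _) hb)).trans (H x)

variable {ρ : AbsoluteValue B ℝ} {hna : IsNonarchimedean ρ} {k : Type u} [Field k] [Finite k]
  {res : OO ρ hna →+* k} (hsurj : Function.Surjective res)
  (hres : ∀ x, res x = 0 ↔ ρ (x : B) < 1)

lemma conj_mem (x : Bˣ) (a : OO ρ hna) : (x : B) * a * (x⁻¹ : Bˣ) ∈ OO ρ hna := by
  have hx : ρ (x : B) ≠ 0 := by simp
  have : ρ ((x : B) * a * (x⁻¹ : Bˣ)) = ρ (a : B) := by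
    rw [map_mul, map_mul, Units.val_inv_eq_inv_val, map_inv₀]
    field_simp
  rw [mem_OO, this]
  exact a.2

include hsurj hres in
lemma exists_conj (x : Bˣ) : ∃ σ : RingAut k, ∀ a : OO ρ hna, σ (res a) = res ⟨_, conj_mem x a⟩ := by
  let g : OO ρ hna →+* OO ρ hna :=
    { toFun := fun a => ⟨_, conj_mem x a⟩
      map_one' := Subtype.ext (by simp)
      map_zero' := Subtype.ext (by simp)
      map_mul' := fun a b => Subtype.ext (by
        simp [mul_assoc])
      map_add' := fun a b => Subtype.ext (by
        simp [mul_add, add_mul]) }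
  have hker : RingHom.ker res ≤ RingHom.ker (res.comp g) := by
    intro a ha
    rw [RingHom.mem_ker, hres] at ha
    rw [RingHom.mem_ker, RingHom.comp_apply, hres]
    have hx : ρ (x : B) ≠ 0 := by simp
    have : ρ ((x : B) * a * (x⁻¹ : Bˣ)) = ρ (a : B) := by
      rw [map_mul, map_mul, Units.val_inv_eq_inv_val, map_inv₀]
      field_simp
    exact this.trans_lt ha
  let s := RingHom.liftOfSurjective res hsurj ⟨res.comp g, hker⟩
  have hs : ∀ a, s (res a) = res (g a) := fun a =>
    RingHom.liftOfRightInverse_comp_apply _ _ _ ⟨res.comp g, hker⟩ a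
  exact ⟨RingEquiv.ofBijective s (Finite.injective_iff_bijective.1 s.injective), hs⟩

include hsurj hres in
lemma exists_conjHom : ∃ c : Bˣ →* RingAut k, ∀ (x : Bˣ) (a : OO ρ hna),
    c x (res a) = res ⟨_, conj_mem x a⟩ := by
  choose c hc using exists_conj hsurj hres
  have hmul : ∀ x y, c (x * y) = c x * c y := by
    intro x y
    refine RingEquiv.ext fun a => ?_
    obtain ⟨a, rfl⟩ := hsurj a
    rw [RingAut.mul_apply, hc, hc, hc]
    congr 1
    exact Subtype.ext (by simp [mul_assoc])
  exact ⟨MonoidHom.mk' c hmul, hc⟩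

variable {c : Bˣ →* RingAut k} (hc : ∀ (x : Bˣ) (a : OO ρ hna), c x (res a) = res ⟨_, conj_mem x a⟩)

include hsurj hc in
lemma conj_unit (u : Bˣ) (hu : ρ (u : B) = 1) : c u = 1 := by
  refine RingEquiv.ext fun a => ?_
  obtain ⟨a, rfl⟩ := hsurj a
  rw [hc, RingAut.one_apply]
  have h1 : ρ ((u⁻¹ : Bˣ) : B) = 1 := by
    rw [Units.val_inv_eq_inv_val]; exact rho_inv_le ρ hu
  have e1 : (⟨_, conj_mem u a⟩ : OO ρ hna) = ⟨u, hu.le⟩ * a * ⟨(u⁻¹ : Bˣ), h1.le⟩ := rfl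
  rw [e1, map_mul, map_mul, mul_right_comm, ← map_mul]
  have e2 : (⟨u, hu.le⟩ : OO ρ hna) * ⟨(u⁻¹ : Bˣ), h1.le⟩ = 1 := Subtype.ext (by simp)
  rw [e2, map_one, one_mul]

include hsurj hc in
lemma conj_eq (x y : Bˣ) (h : ρ (x : B) = ρ (y : B)) : c x = c y := by
  have := conj_unit hsurj hc (x * y⁻¹) (by
    rw [Units.val_mul, map_mul, Units.val_inv_eq_inv_val, map_inv₀, h]
    exact mul_inv_cancel₀ (by simp))
  rw [map_mul, map_inv] at this
  exact mul_inv_eq_one.1 this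

include hsurj hc hres in
/-- the fixed field of conjugation by a uniformizer is the residue field of the centre -/
theorem fixed_mem (K : Subfield B) (hK : ∀ c, c ∈ K ↔ ∀ b, b * c = c * b) [Module.Finite K B]
    (π : Bˣ) (hπ1 : ρ (π : B) < 1) (hπ : ∀ x : B, ρ x < 1 → ρ x ≤ ρ (π : B))
    (hdisc : ∀ x : B, x ≠ 0 → ∃ m : ℤ, ρ x = ρ (π : B) ^ m) (α : k) (hα : c π α = α) :
    α ∈ resSub res hres K := by
  obtain ⟨b, rfl⟩ := hsurj α
  have := Fintype.ofFinite k
  set r0 := ρ (π : B) with hr0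
  have hr00 : 0 ≤ r0 := ρ.nonneg _
  -- all conjugations fix `res b`
  have hall : ∀ x : Bˣ, c x (res b) = res b := by
    intro x
    obtain ⟨m, hm⟩ := hdisc x x.ne_zero
    have h1 : c x = c (π ^ m) := conj_eq hsurj hc _ _ (by
      rw [hm, Units.val_zpow_eq_zpow_val, map_zpow₀])
    rw [h1, map_zpow]
    have h2 : c π ∈ MulAction.stabilizer (RingAut k) (res b) := hα
    exact Subgroup.zpow_mem _ h2 m
  have h0 : ∀ x : B, ρ (x * b - b * x) ≤ r0 * ρ x := by
    intro x
    by_cases hx : x = 0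
    · simp [hx]
    have h1 := hall (Units.mk0 x hx)
    rw [hc, res_eq_iff hres] at h1
    have h2 := hπ _ h1
    have e1 : x * b - b * x = (x * b * x⁻¹ - b) * x := by
      rw [sub_mul, inv_mul_cancel_right₀ hx]
    rw [e1, map_mul]
    refine mul_le_mul_of_nonneg_right ?_ (ρ.nonneg _)
    simpa using h2
  set Q := Fintype.card k with hQ
  have hQpos : 0 < Q := Fintype.card_pos
  have hQr : ρ (Q : B) ≤ r0 := by
    apply hπ
    have h1 : res (Q : OO ρ hna) = 0 := by rw [map_natCast, hQ, FiniteField.cast_card_eq_zero]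
    rw [hres] at h1
    simpa using h1
  have hs : ∀ s : ℕ, ∀ x : B, ρ (x * (b : B) ^ Q ^ s - (b : B) ^ Q ^ s * x) ≤ r0 ^ (s + 1) * ρ x := by
    intro s
    induction s with
    | zero => simpa using h0
    | succ s ih =>
      intro x
      have hb1 : ρ ((b : B) ^ Q ^ s) ≤ 1 := by
        rw [map_pow]; exact pow_le_one₀ (ρ.nonneg _) b.2
      have h1 := comm_pow_le hna hb1 (r := r0 ^ (s + 1)) (r0 := r0) (by positivity)
        (by rw [pow_succ]; exact mul_le_of_le_one_left hr00 (pow_le_one₀ hr00 hπ1.le)) ih Q hQpos hQr x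
      rw [← pow_mul, ← pow_succ] at h1
      rw [pow_succ r0 (s + 1)]
      exact h1
  obtain ⟨P, hP, hPK, hP1⟩ := exists_trace K hK
  obtain ⟨M, hM, hMc⟩ := op_central (ρ := ρ) hP
  obtain ⟨s, hs'⟩ := exists_pow_lt_of_lt_one (show 0 < M⁻¹ by positivity) hπ1
  have h2 := hMc _ _ (hs s)
  rw [hP1, mul_one] at h2
  have h3 : ρ (P ((b : B) ^ Q ^ s) - (b : B) ^ Q ^ s) < 1 := by
    refine h2.trans_lt ?_
    have : r0 ^ (s + 1) ≤ r0 ^ s := pow_le_pow_of_le_one hr00 hπ1.le (by omega)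
    have h4 : r0 ^ s * M < 1 := by rwa [← one_div, lt_div_iff₀ hM] at hs'
    nlinarith
  have hbO : ρ ((b : B) ^ Q ^ s) ≤ 1 := by
    rw [map_pow]; exact pow_le_one₀ (ρ.nonneg _) b.2
  have hPO : ρ (P ((b : B) ^ Q ^ s)) ≤ 1 := by
    have := hna (P ((b : B) ^ Q ^ s) - (b : B) ^ Q ^ s) ((b : B) ^ Q ^ s)
    rw [sub_add_cancel] at this
    exact this.trans (max_le h3.le hbO)
  refine ⟨⟨_, hPO⟩, hPK _, ?_⟩
  have h5 : res b = res (b ^ Q ^ s) := by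
    rw [map_pow, hQ, FiniteField.pow_card_pow]
  rw [h5, res_eq_iff hres]
  simpa using h3

omit [Finite k] in
/-- Galois theory over finite fields: field fixed by `σ ^ d`. -/
theorem card_fixed_le [Finite k] (σ : RingAut k) (d q : ℕ) (hd : 0 < d) (hq : 0 < q) (F E : Subfield k)
    (hF : ∀ α, σ α = α → α ∈ F) (hFq : Nat.card F = q) (hE : ∀ α ∈ E, (σ ^ d) α = α) :
    Nat.card E ≤ q ^ d := by
  classical
  have hfin : Finite (RingAut k) :=
    Finite.of_injective (fun s : RingAut k => (s : k → k)) DFunLike.coe_injective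
  let G := Subgroup.zpowers σ
  let H := Subgroup.zpowers (σ ^ d)
  have := Fintype.ofFinite G
  have := Fintype.ofFinite H
  have hG := FixedPoints.finrank_eq_card G k
  have hH := FixedPoints.finrank_eq_card H k
  have cG := Module.natCard_eq_pow_finrank (K := FixedPoints.subfield G k) (V := k)
  have cH := Module.natCard_eq_pow_finrank (K := FixedPoints.subfield H k) (V := k)
  rw [hG, Fintype.card_eq_nat_card, Nat.card_zpowers] at cG
  rw [hH, Fintype.card_eq_nat_card, Nat.card_zpowers] at cH
  have h1 : Nat.card (FixedPoints.subfield G k) ≤ q := by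
    rw [← hFq]
    refine Nat.card_mono (s := (FixedPoints.subfield G k : Set k)) (t := (F : Set k))
      (Set.toFinite _) ?_
    intro α hα
    exact hF α (hα ⟨σ, Subgroup.mem_zpowers σ⟩)
  have h2 : Nat.card E ≤ Nat.card (FixedPoints.subfield H k) := by
    refine Nat.card_mono (s := (E : Set k)) (t := (FixedPoints.subfield H k : Set k))
      (Set.toFinite _) ?_
    rintro α hα ⟨_, m, rfl⟩
    have h2 : σ ^ d ∈ MulAction.stabilizer (RingAut k) α := hE α hα
    exact Subgroup.zpow_mem _ h2 m
  refine h2.trans ?_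
  have hpos : 0 < orderOf (σ ^ d) := orderOf_pos _
  have hle : orderOf σ ≤ d * orderOf (σ ^ d) := by
    refine orderOf_le_of_pow_eq_one (by positivity) ?_
    rw [pow_mul, pow_orderOf_eq_one]
  rw [← Nat.pow_le_pow_iff_left hpos.ne', ← cH, cG, ← pow_mul]
  exact (Nat.pow_le_pow_left h1 _).trans (Nat.pow_le_pow_right hq hle)

end frob
end RRS
namespace RRS
section final
universe u
variable {B : Type u} [DivisionRing B]

lemma pos_exp {a b : ℝ} (h0 : 0 < b) (h1 : b < 1) (ha : a < 1) (h : ∃ m : ℤ, a = b ^ m) :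
    ∃ d : ℕ, 0 < d ∧ a = b ^ d := by
  obtain ⟨m, rfl⟩ := h
  have hm : 0 < m := by
    by_contra hm
    exact absurd ha (not_lt.2 (one_le_zpow_of_nonpos₀ h0 h1.le (not_lt.1 hm)))
  lift m to ℕ using hm.le
  exact ⟨m, by exact_mod_cast hm, by simp⟩

/-- centralizer as a subfield -/
def cent (s : Set B) : Subfield B :=
  { Subring.centralizer s with
    inv_mem' := by
      intro x hx
      exact Set.inv_mem_centralizer₀ hx }

lemma mem_cent {s : Set B} {x : B} : x ∈ cent s ↔ ∀ l ∈ s, l * x = x * l := Iff.rfl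

lemma indep_mono {K C : Subfield B} (h : K ≤ C) {ι : Type*} [Fintype ι] {x : ι → B}
    (hx : LinearIndependent C x) : LinearIndependent K x := by
  rw [Fintype.linearIndependent_iff] at *
  intro g hg i
  have := hx (fun i => ⟨g i, h (g i).2⟩) hg i
  have h2 : (g i : B) = 0 := congrArg (Subtype.val : C → B) this
  exact Subtype.ext h2

lemma basis_fin {C : Subfield B} [Module.Finite C B] :
    ∃ b : Fin (Module.finrank C B) → B, LinearIndependent C b ∧
      ∀ x, ∃ c : Fin (Module.finrank C B) → B, (∀ i, c i ∈ C) ∧ x = ∑ i, c i * b i := by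
  let b := Module.finBasis C B
  refine ⟨b, b.linearIndependent, fun x => ⟨fun i => b.repr x i, fun i => Subtype.mem _, ?_⟩⟩
  exact (b.sum_repr x).symm

lemma indep_tower {K C : Subfield B} (h : K ≤ C) {m n : ℕ} (p : Fin m → B) (hp : LinearIndependent K p)
    (hpC : ∀ i, p i ∈ C) (b : Fin n → B) (hb : LinearIndependent C b) :
    LinearIndependent K (fun i : Fin m × Fin n => p i.1 * b i.2) := by
  rw [Fintype.linearIndependent_iff] at *
  intro g hg
  rw [Fintype.sum_prod_type_right] at hg
  have h1 := hb (fun j => ⟨∑ i, (g (i, j) : B) * p i,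
    C.sum_mem fun i _ => C.mul_mem (h (g (i, j)).2) (hpC i)⟩) (by
      rw [← hg]
      refine Finset.sum_congr rfl fun j _ => ?_
      simp only [Subfield.smul_def, smul_eq_mul, Finset.sum_mul, mul_assoc])
  rintro ⟨i, j⟩
  exact hp (fun i => g (i, j)) (congrArg Subtype.val (h1 j)) i

theorem main_aux {ρ : AbsoluteValue B ℝ} (hna : IsNonarchimedean ρ) (q n : ℕ) (hq : 2 ≤ q)
    (K L C : Subfield B) (hK : ∀ c, c ∈ K ↔ ∀ b, b * c = c * b)
    (hresK : resCard ρ (K : Set B) = q)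
    (hresB : resCard ρ (Set.univ : Set B) = q ^ n)
    (hKL : K ≤ L) (hC : ∀ c, c ∈ C ↔ ∀ l ∈ L, l * c = c * l)
    (πK πL πC πB : B)
    (hπKmem : πK ∈ K) (hπLmem : πL ∈ L) (hπCmem : πC ∈ C)
    (hπK : 0 < ρ πK ∧ ρ πK < 1 ∧ ∀ x ∈ K, ρ x < 1 → ρ x ≤ ρ πK)
    (hπL : 0 < ρ πL ∧ ρ πL < 1 ∧ ∀ x ∈ L, ρ x < 1 → ρ x ≤ ρ πL)
    (hπC : 0 < ρ πC ∧ ρ πC < 1 ∧ ∀ x ∈ C, ρ x < 1 → ρ x ≤ ρ πC)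
    (hπB : 0 < ρ πB ∧ ρ πB < 1 ∧ ∀ x : B, ρ x < 1 → ρ x ≤ ρ πB)
    (hdisc : ∀ x : B, x ≠ 0 → ∃ k : ℤ, ρ x = ρ πB ^ k)
    (eLK eBC : ℕ) (heLK : ρ πK = ρ πL ^ eLK) (heBC : ρ πC = ρ πB ^ eBC)
    (fLK fBC : ℕ)
    (hfLK : resCard ρ (L : Set B) = q ^ fLK)
    (hfBC : resCard ρ (Set.univ : Set B) = resCard ρ (C : Set B) ^ fBC) :
    eLK = fBC ∧ fLK = eBC := by
  classical
  have hq0 : 0 < q := by omega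
  obtain ⟨k, _, _, res, hsurj, hres⟩ := exists_residue hna (by rw [hresB]; positivity)
  have htop : ((⊤ : Subfield B) : Set B) = Set.univ := rfl
  rw [← htop] at hresB hfBC
  rw [resCard_eq hres] at hresK hresB hfLK
  rw [resCard_eq hres, resCard_eq hres] at hfBC
  have hKC : K ≤ C := fun x hx => (hC x).2 fun l _ => (hK x).1 hx l
  have hKT : K ≤ (⊤ : Subfield B) := le_top
  -- nonzero elements
  have ne0 : ∀ x : B, 0 < ρ x → x ≠ 0 := by rintro x h rfl; simp at h
  -- exponents
  obtain ⟨a, ha0, ha⟩ := pos_exp hπB.1 hπB.2.1 hπL.2.1 (hdisc πL (ne0 _ hπL.1))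
  have heLK0 : 0 < eLK := by
    rcases Nat.eq_zero_or_pos eLK with h | h
    · rw [h, pow_zero] at heLK; linarith [hπK.2.1]
    · exact h
  have heBC0 : 0 < eBC := by
    rcases Nat.eq_zero_or_pos eBC with h | h
    · rw [h, pow_zero] at heBC; linarith [hπC.2.1]
    · exact h
  have heBK : ρ πK = ρ πB ^ (a * eLK) := by rw [heLK, ha, ← pow_mul]
  have he0 : 0 < a * eLK := by positivity
  have hfLK0 : 0 < fLK := by
    rcases Nat.eq_zero_or_pos fLK with h | h
    · rw [h, pow_zero] at hfLK
      have : 1 < Nat.card (resSub res hres L) := Finite.one_lt_card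
      omega
    · exact h
  obtain ⟨fC, hfC⟩ := subfield_card _ _ (resSub_mono hres hKC)
  rw [hresK] at hfC
  have hn : n = fC * fBC := by
    rw [hresB, hfC, ← pow_mul] at hfBC
    exact Nat.pow_right_injective hq hfBC
  -- bases of residue fields, lifted
  have lift : ∀ S T : Subfield B, S ≤ T → ∀ f,
      Nat.card (resSub res hres T) = Nat.card (resSub res hres S) ^ f →
      ∃ b : Fin f → OO ρ hna, (∀ i, (b i : B) ∈ T) ∧
        LinearIndependent (resSub res hres S) (fun i => res (b i)) ∧
        ∀ α ∈ resSub res hres T, ∃ c : Fin f → resSub res hres S, α = ∑ i, (c i : k) * res (b i) := by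
    intro S T hST f hf
    obtain ⟨v, hv, hvi, hvs⟩ := subfield_basis _ _ (resSub_mono hres hST) hf
    choose b hb hb' using hv
    obtain rfl : (fun i => res (b i)) = v := funext hb'
    exact ⟨b, hb, hvi, hvs⟩
  -- dimension bound for B over K
  have hboundB : ∀ (N : ℕ) (x : Fin N → B), LinearIndependent K x → N ≤ n * (a * eLK) := by
    intro N x hx
    obtain ⟨b, hb, -, hbs⟩ := lift K ⊤ hKT n (by rw [hresB, hresK])
    exact upper hres K ⊤ hKT hK πK πB hπKmem trivial
      ⟨hπB.1, hπB.2.1, fun x _ h => hπB.2.2 x h⟩ he0 heBK b hb hbs x (fun _ => trivial) hx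
  have hfinK : Module.Finite K B := (fin_of_bound hboundB).1
  -- conjugation
  obtain ⟨c, hc⟩ := exists_conjHom hsurj hres
  set π : Bˣ := Units.mk0 πB (ne0 _ hπB.1) with hπdef
  have hfix : ∀ α, c π α = α → α ∈ resSub res hres K :=
    fixed_mem hsurj hres hc K hK π hπB.2.1 hπB.2.2 hdisc
  have lemma1 : ∀ (S : Subfield B) (x : B) (d f : ℕ), 0 < ρ x → 0 < d → ρ x = ρ πB ^ d →
      (∀ s ∈ S, x * s = s * x) → Nat.card (resSub res hres S) = q ^ f → f ≤ d := by
    intro S x d f hx hd hxd hcomm hf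
    have h1 : c (Units.mk0 x (ne0 _ hx)) = c π ^ d := by
      rw [← map_pow]
      refine conj_eq hsurj hc _ _ ?_
      rw [Units.val_pow_eq_pow_val, map_pow]
      exact hxd
    have h2 := card_fixed_le (c π) d q hd hq0 (resSub res hres K) (resSub res hres S) hfix hresK (by
      rintro _ ⟨s, hs, rfl⟩
      rw [← h1, hc]
      congr 1
      refine Subtype.ext ?_
      simp only [Units.val_mk0, Units.val_inv_eq_inv_val]
      rw [hcomm s hs, mul_inv_cancel_right₀ (ne0 _ hx)])
    rw [hf] at h2
    exact (Nat.pow_le_pow_iff_right hq).1 h2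
  have i1 : fLK ≤ eBC := lemma1 L πC eBC fLK hπC.1 heBC0 heBC
    (fun s hs => ((hC πC).1 hπCmem s hs).symm) hfLK
  have i2 : fC ≤ a := lemma1 C πL a fC hπL.1 ha0 ha (fun s hs => (hC s).1 hs πL hπLmem) hfC
  -- `[B : C] ≤ [L : K] ≤ e f`
  have i3 : fBC * eBC ≤ fLK * eLK := by
    let V : Submodule K B :=
      { carrier := L
        add_mem' := L.add_mem
        zero_mem' := L.zero_mem
        smul_mem' := fun c x hx => L.mul_mem (hKL c.2) hx }
    have hV : ∀ (N : ℕ) (x : Fin N → V), LinearIndependent K x → N ≤ fLK * eLK := by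
      intro N x hx
      obtain ⟨b, hb, -, hbs⟩ := lift K L hKL fLK (by rw [hfLK, hresK])
      exact upper hres K L hKL hK πK πL hπKmem hπLmem hπL heLK0 heLK b hb hbs
        (fun i => (x i : B)) (fun i => (x i).2) (hx.map' V.subtype (Submodule.ker_subtype V))
    obtain ⟨hVf, hVr⟩ := fin_of_bound hV
    refine le_trans ?_ hVr
    obtain ⟨b, -, hbi, -⟩ := lift C ⊤ le_top fBC hfBC
    have hind := lower hres C πC πB hπCmem hπC hπB.1 hπB.2.1 heBC b hbi
    let bV := Module.finBasis K V
    refine le_of_span_left L.toSubring K C hC hK _ (hind.comp _ finProdFinEquiv.symm.injective)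
      (fun i => (bV i : B)) ?_
    intro x hx
    refine ⟨fun i => bV.repr ⟨x, hx⟩ i, fun i => Subtype.mem _, ?_⟩
    have := congrArg Subtype.val (bV.sum_repr ⟨x, hx⟩)
    refine Eq.trans this.symm ?_
    rw [Submodule.coe_sum]
    rfl
  -- `e ≤ n`
  have i4 : a * eLK ≤ n := by
    let C1 : Subfield B := cent {πB}
    have hKC1 : K ≤ C1 := fun x hx => mem_cent.2 fun l _ => (hK x).1 hx l
    have hfin1 : Module.Finite C1 B :=
      (fin_of_bound fun N x hx => hboundB N x (indep_mono hKC1 hx)).1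
    obtain ⟨b, hbi, hbs⟩ := basis_fin (C := C1)
    have hpow : LinearIndependent K (fun j : Fin (a * eLK) => πB ^ (j : ℕ)) := by
      have h1 := lower hres K πK πB hπKmem hπK hπB.1 hπB.2.1 heBK (fun _ : Fin 1 => 1) (by
        rw [Fintype.linearIndependent_iff]
        intro g hg i
        have hi : i = 0 := Subsingleton.elim _ _
        subst hi
        simpa [Subfield.smul_def] using hg)
      have h2 := h1.comp (fun j : Fin (a * eLK) => ((0 : Fin 1), j)) (fun i j h => (Prod.ext_iff.1 h).2)
      simpa [Function.comp_def] using h2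
    have hle1 : a * eLK ≤ Module.finrank C1 B := by
      refine le_of_span_right K C1 hK (fun j : Fin (a * eLK) => πB ^ (j : ℕ)) hpow ?_ b hbs
      intro j x hx
      have : Commute πB x := mem_cent.1 hx πB rfl
      exact (this.pow_left j)
    have htow := indep_tower hKC1 _ hpow
      (fun j => C1.pow_mem (mem_cent.2 (by simp)) _) b hbi
    have hle2 := hboundB _ _ (htow.comp _ finProdFinEquiv.symm.injective)
    rw [mul_comm n] at hle2
    exact hle1.trans (Nat.le_of_mul_le_mul_left hle2 he0)
  have i5 : eLK ≤ fBC := by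
    have : a * eLK ≤ a * fBC := by
      calc a * eLK ≤ n := i4
        _ = fC * fBC := hn
        _ ≤ a * fBC := Nat.mul_le_mul_right _ i2
    exact Nat.le_of_mul_le_mul_left this ha0
  constructor
  · by_contra hne
    have : eLK < fBC := lt_of_le_of_ne i5 hne
    nlinarith
  · by_contra hne
    have : fLK < eBC := lt_of_le_of_ne i1 hne
    nlinarith

end final
end RRS
/-- Lemma 3.1: let B be a finite-dimensional central division algebra
over a nonarchimedean local field K (realized as the center of B, with absolute
value ρ, residue field of cardinality q and residue field of B of cardinality q^n),
let L ⊆ B be a division subalgebra and C its centralizer.  If e(L/K), f(L/K),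
e(B/C), f(B/C) are the ramification indices (characterized by the valuations of
uniformizers) and residue degrees (characterized by the cardinalities of the
residue fields), then e(L/K) = f(B/C) and f(L/K) = e(B/C). -/
theorem ramification_residue_swap
    (B : Type*) [DivisionRing B] (ρ : AbsoluteValue B ℝ)
    (hna : IsNonarchimedean ρ)
    -- B is a local division algebra: finite residue field, discrete valuation
    (q n : ℕ) (hq : 2 ≤ q) (hn : 0 < n)
    (hresK : resCard ρ (Subring.center B : Set B) = q)
    (hresB : resCard ρ (Set.univ : Set B) = q ^ n)
    -- L is a division subalgebra containing the center K, C its centralizer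
    (L : Subring B) (hKL : Subring.center B ≤ L)
    (hLdiv : ∀ x ∈ L, x ≠ 0 → x⁻¹ ∈ L)
    (C : Subring B) (hC : C = Subring.centralizer (L : Set B))
    -- uniformizers of K, L, C and B
    (πK πL πC πB : B)
    (hπKmem : πK ∈ Subring.center B) (hπLmem : πL ∈ L) (hπCmem : πC ∈ C)
    (hπK : 0 < ρ πK ∧ ρ πK < 1 ∧ ∀ x ∈ Subring.center B, ρ x < 1 → ρ x ≤ ρ πK)
    (hπL : 0 < ρ πL ∧ ρ πL < 1 ∧ ∀ x ∈ L, ρ x < 1 → ρ x ≤ ρ πL)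
    (hπC : 0 < ρ πC ∧ ρ πC < 1 ∧ ∀ x ∈ C, ρ x < 1 → ρ x ≤ ρ πC)
    (hπB : 0 < ρ πB ∧ ρ πB < 1 ∧ ∀ x : B, x ≠ 0 → ρ x < 1 → ρ x ≤ ρ πB)
    (hdisc : ∀ x : B, x ≠ 0 → ∃ k : ℤ, ρ x = ρ πB ^ k)
    -- ramification indices: e(D/D') is defined by ρ(π_{D'}) = ρ(π_D)^{e(D/D')}
    (eLK eBC : ℕ)
    (heLK : ρ πK = ρ πL ^ eLK)
    (heBC : ρ πC = ρ πB ^ eBC)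
    -- residue degrees: f(D/D') = [residue field of D : residue field of D']
    (fLK fBC : ℕ)
    (hfLK : resCard ρ (L : Set B) = q ^ fLK)
    (hfBC : resCard ρ (Set.univ : Set B) = resCard ρ (C : Set B) ^ fBC) :
    eLK = fBC ∧ fLK = eBC := by

  have hne : ∀ x ∈ Subring.center B, x⁻¹ ∈ Subring.center B := fun x hx =>
    Set.inv_mem_center hx
  let K' : Subfield B := { Subring.center B with inv_mem' := hne }
  let L' : Subfield B :=
    { L with
      inv_mem' := fun x hx => by
        by_cases h : x = 0
        · subst h; rw [inv_zero]; exact L.zero_mem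
        · exact hLdiv x hx h }
  have hC' : ∀ c, c ∈ RRS.cent (L : Set B) ↔ c ∈ C := fun c => by rw [hC]; rfl
  have hCset : ((RRS.cent (L : Set B) : Subfield B) : Set B) = (C : Set B) := Set.ext hC'
  refine RRS.main_aux hna q n hq K' L' (RRS.cent (L : Set B)) (fun c => Subring.mem_center_iff)
    hresK hresB hKL (fun c => Iff.rfl) πK πL πC πB hπKmem hπLmem ((hC' _).2 hπCmem) hπK hπL
    ⟨hπC.1, hπC.2.1, fun x hx => hπC.2.2 x ((hC' x).1 hx)⟩
    ⟨hπB.1, hπB.2.1, fun x hx => ?_⟩ hdisc eLK eBC heLK heBC fLK fBC hfLK (by rw [hCset]; exact hfBC)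
  by_cases h : x = 0
  · rw [h, map_zero]; exact hπB.1.le
  · exact hπB.2.2 x h hx
end

section
/- Let B be a noncommutative central division algebra over a local field and let Δ₀ = M₂(O_B) with maximal two-sided ideal M = π_BΔ₀. Then the order Δ₀^{[2]} = {x ∈ Δ₀ : x mod M² is central in Δ₀/M²} is not the intersection of any three maximal orders of M₂(B), because (i) Δ₀^{[2]} is the intersection of the maximal orders in the ball of radius 2 around Δ₀, whose branch is the full ball of radius 2, (ii) the intersection of any three maximal orders contains a conjugate of O_B (diagonally embedded), and (iii) the branch S(O_B) contains no ball of radius 2. -/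
noncomputable section

variable {B : Type*} [DivisionRing B]

/-- A maximal order of M₂(B): a conjugate u·M₂(O_B)·u⁻¹ of the standard maximal
order M₂(O_B). -/
def IsMaxOrder (ρ : AbsoluteValue B ℝ) (Δ : Set (Matrix (Fin 2) (Fin 2) B)) :
    Prop :=
  ∃ u uinv : Matrix (Fin 2) (Fin 2) B, u * uinv = 1 ∧ uinv * u = 1 ∧
    Δ = {x | ∃ m : Matrix (Fin 2) (Fin 2) B,
      (∀ i j, ρ (m i j) ≤ 1) ∧ x = u * m * uinv}

/-- The order Δ₀^{[t]} = {x ∈ M₂(O_B) : x mod M^t is central in M₂(O_B)/M^t},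
M = π_B·M₂(O_B): integral matrices congruent mod π_B^t to a scalar matrix c·Id
with c central modulo π_B^t O_B. -/
def congruenceOrder (ρ : AbsoluteValue B ℝ) (πB : B) (t : ℕ) :
    Set (Matrix (Fin 2) (Fin 2) B) :=
  {h | (∀ i j, ρ (h i j) ≤ 1) ∧
    ∃ c : B, ρ c ≤ 1 ∧ (∀ x : B, ρ x ≤ 1 → ρ (c * x - x * c) ≤ ρ πB ^ t) ∧
      ∀ i j, ρ (h i j - (if i = j then c else 0)) ≤ ρ πB ^ t}

/-- entrywise bound on matrices -/
def EBd (ρ : AbsoluteValue B ℝ) (C : ℝ) (m : Matrix (Fin 2) (Fin 2) B) : Prop :=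
  ∀ i j, ρ (m i j) ≤ C

theorem na_add {ρ : AbsoluteValue B ℝ} (hna : IsNonarchimedean ρ) {x y : B} {C : ℝ}
    (hx : ρ x ≤ C) (hy : ρ y ≤ C) : ρ (x + y) ≤ C :=
  (hna x y).trans (max_le hx hy)

theorem na_sub {ρ : AbsoluteValue B ℝ} (hna : IsNonarchimedean ρ) {x y : B} {C : ℝ}
    (hx : ρ x ≤ C) (hy : ρ y ≤ C) : ρ (x - y) ≤ C := by
  rw [sub_eq_add_neg]
  exact na_add hna hx (by rwa [ρ.map_neg])

theorem rho_mul {ρ : AbsoluteValue B ℝ} {x y : B} {C D : ℝ}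
    (hx : ρ x ≤ C) (hy : ρ y ≤ D) : ρ (x * y) ≤ C * D := by
  rw [ρ.map_mul]
  exact mul_le_mul hx hy (ρ.nonneg _) ((ρ.nonneg _).trans hx)

theorem EBd.mul {ρ : AbsoluteValue B ℝ} (hna : IsNonarchimedean ρ)
    {m n : Matrix (Fin 2) (Fin 2) B} {C D : ℝ}
    (hm : EBd ρ C m) (hn : EBd ρ D n) : EBd ρ (C * D) (m * n) := by
  intro i j
  rw [Matrix.mul_apply, Fin.sum_univ_two]
  exact na_add hna (rho_mul (hm _ _) (hn _ _)) (rho_mul (hm _ _) (hn _ _))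

theorem EBd.mul1 {ρ : AbsoluteValue B ℝ} (hna : IsNonarchimedean ρ)
    {m n : Matrix (Fin 2) (Fin 2) B}
    (hm : EBd ρ 1 m) (hn : EBd ρ 1 n) : EBd ρ 1 (m * n) := by
  simpa using hm.mul hna hn

theorem EBd.add {ρ : AbsoluteValue B ℝ} (hna : IsNonarchimedean ρ)
    {m n : Matrix (Fin 2) (Fin 2) B} {C : ℝ}
    (hm : EBd ρ C m) (hn : EBd ρ C n) : EBd ρ C (m + n) :=
  fun i j => na_add hna (hm i j) (hn i j)

theorem EBd.sub {ρ : AbsoluteValue B ℝ} (hna : IsNonarchimedean ρ)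
    {m n : Matrix (Fin 2) (Fin 2) B} {C : ℝ}
    (hm : EBd ρ C m) (hn : EBd ρ C n) : EBd ρ C (m - n) :=
  fun i j => na_sub hna (hm i j) (hn i j)

theorem EBd.exists (ρ : AbsoluteValue B ℝ) (m : Matrix (Fin 2) (Fin 2) B) :
    ∃ C, 0 ≤ C ∧ EBd ρ C m := by
  refine ⟨∑ i, ∑ j, ρ (m i j), by positivity, fun i j => ?_⟩
  calc ρ (m i j) ≤ ∑ j, ρ (m i j) :=
        Finset.single_le_sum (f := fun j => ρ (m i j)) (fun _ _ => ρ.nonneg _) (Finset.mem_univ j)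
    _ ≤ _ := Finset.single_le_sum (f := fun i => ∑ j, ρ (m i j))
        (fun _ _ => Finset.sum_nonneg fun _ _ => ρ.nonneg _) (Finset.mem_univ i)

/-- the pair (a, a') is an element of GL₂(O) together with its inverse -/
structure GLO (ρ : AbsoluteValue B ℝ) (a a' : Matrix (Fin 2) (Fin 2) B) : Prop where
  h1 : a * a' = 1
  h2 : a' * a = 1
  b1 : EBd ρ 1 a
  b2 : EBd ρ 1 a'

theorem GLO.one (ρ : AbsoluteValue B ℝ) : GLO ρ 1 1 := by
  refine ⟨by simp, by simp, ?_, ?_⟩ <;>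
  · intro i j
    fin_cases i <;> fin_cases j <;> simp

theorem GLO.symm {ρ : AbsoluteValue B ℝ} {a a' : Matrix (Fin 2) (Fin 2) B}
    (h : GLO ρ a a') : GLO ρ a' a := ⟨h.h2, h.h1, h.b2, h.b1⟩

theorem GLO.mul {ρ : AbsoluteValue B ℝ} (hna : IsNonarchimedean ρ)
    {a a' b b' : Matrix (Fin 2) (Fin 2) B}
    (h : GLO ρ a a') (k : GLO ρ b b') : GLO ρ (a * b) (b' * a') := by
  refine ⟨?_, ?_, h.b1.mul1 hna k.b1, k.b2.mul1 hna h.b2⟩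
  · rw [mul_assoc, ← mul_assoc b, k.h1, one_mul, h.h1]
  · rw [mul_assoc, ← mul_assoc a', h.h2, one_mul, k.h2]

theorem GLO.swap (ρ : AbsoluteValue B ℝ) : GLO ρ !![0, 1; 1, 0] !![0, 1; 1, 0] := by
  refine ⟨?_, ?_, ?_, ?_⟩
  · simp [Matrix.mul_fin_two, Matrix.one_fin_two]
  · simp [Matrix.mul_fin_two, Matrix.one_fin_two]
  all_goals
    intro i j
    fin_cases i <;> fin_cases j <;> simp

theorem GLO.lower {ρ : AbsoluteValue B ℝ} {t : B} (ht : ρ t ≤ 1) :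
    GLO ρ !![1, 0; t, 1] !![1, 0; -t, 1] := by
  refine ⟨?_, ?_, ?_, ?_⟩
  · simp [Matrix.mul_fin_two, Matrix.one_fin_two]
  · simp [Matrix.mul_fin_two, Matrix.one_fin_two]
  all_goals
    intro i j
    fin_cases i <;> fin_cases j <;> simp [ht]

theorem GLO.upper {ρ : AbsoluteValue B ℝ} {t : B} (ht : ρ t ≤ 1) :
    GLO ρ !![1, t; 0, 1] !![1, -t; 0, 1] := by
  refine ⟨?_, ?_, ?_, ?_⟩
  · simp [Matrix.mul_fin_two, Matrix.one_fin_two]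
  · simp [Matrix.mul_fin_two, Matrix.one_fin_two]
  all_goals
    intro i j
    fin_cases i <;> fin_cases j <;> simp [ht]

theorem rho_div_left {ρ : AbsoluteValue B ℝ} {x y : B} (h : ρ x ≤ ρ y) : ρ (y⁻¹ * x) ≤ 1 := by
  rw [ρ.map_mul, map_inv₀, mul_comm, ← div_eq_mul_inv]
  exact div_le_one_of_le₀ h (ρ.nonneg _)

theorem rho_div_right {ρ : AbsoluteValue B ℝ} {x y : B} (h : ρ x ≤ ρ y) : ρ (x * y⁻¹) ≤ 1 := by
  rw [ρ.map_mul, map_inv₀, ← div_eq_mul_inv]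
  exact div_le_one_of_le₀ h (ρ.nonneg _)

theorem iwasawa (ρ : AbsoluteValue B ℝ) (hna : IsNonarchimedean ρ)
    (w : Matrix (Fin 2) (Fin 2) B) :
    ∃ c c', GLO ρ c c' ∧ (w * c) 1 0 = 0 := by
  have key : ∀ w : Matrix (Fin 2) (Fin 2) B, ρ (w 1 0) ≤ ρ (w 1 1) →
      ∃ c c', GLO ρ c c' ∧ (w * c) 1 0 = 0 := by
    intro w h
    by_cases hd : w 1 1 = 0
    · refine ⟨1, 1, GLO.one ρ, ?_⟩
      rw [hd, map_zero] at h
      simpa using ρ.eq_zero.1 (le_antisymm h (ρ.nonneg _))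
    · refine ⟨_, _, GLO.lower (t := -((w 1 1)⁻¹ * w 1 0)) ?_, ?_⟩
      · rw [ρ.map_neg]
        exact rho_div_left h
      · simp [Matrix.mul_apply, Fin.sum_univ_two, mul_inv_cancel_left₀ hd]
  rcases le_total (ρ (w 1 0)) (ρ (w 1 1)) with h | h
  · exact key w h
  · obtain ⟨c, c', hc, h0⟩ := key (w * !![0, 1; 1, 0]) (by
      simpa [Matrix.mul_apply, Fin.sum_univ_two] using h)
    exact ⟨_, _, (GLO.swap ρ).mul hna hc, by rwa [← mul_assoc]⟩

theorem cartan (ρ : AbsoluteValue B ℝ) (hna : IsNonarchimedean ρ)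
    (w : Matrix (Fin 2) (Fin 2) B) :
    ∃ a a' b b', GLO ρ a a' ∧ GLO ρ b b' ∧ (a * w * b) 0 1 = 0 ∧ (a * w * b) 1 0 = 0 := by
  have key : ∀ w : Matrix (Fin 2) (Fin 2) B, (∀ i j, ρ (w i j) ≤ ρ (w 0 0)) →
      ∃ a a' b b', GLO ρ a a' ∧ GLO ρ b b' ∧ (a * w * b) 0 1 = 0 ∧ (a * w * b) 1 0 = 0 := by
    intro w h
    by_cases hd : w 0 0 = 0
    · have : ∀ i j, w i j = 0 := fun i j => by
        have := h i j
        rw [hd, map_zero] at this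
        exact ρ.eq_zero.1 (le_antisymm this (ρ.nonneg _))
      exact ⟨1, 1, 1, 1, GLO.one ρ, GLO.one ρ, by simp [this], by simp [this]⟩
    · refine ⟨_, _, _, _, GLO.lower (t := -(w 1 0 * (w 0 0)⁻¹)) ?_,
        GLO.upper (t := -((w 0 0)⁻¹ * w 0 1)) ?_, ?_, ?_⟩
      · rw [ρ.map_neg]
        exact rho_div_right (h _ _)
      · rw [ρ.map_neg]
        exact rho_div_left (h _ _)
      · rw [Matrix.eta_fin_two w, Matrix.mul_fin_two, Matrix.mul_fin_two]
        simp [mul_inv_cancel_left₀ hd]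
      · rw [Matrix.eta_fin_two w, Matrix.mul_fin_two, Matrix.mul_fin_two]
        simp [mul_assoc, inv_mul_cancel₀ hd]
  have key2 : ∀ w : Matrix (Fin 2) (Fin 2) B, (∃ j0, ∀ i j, ρ (w i j) ≤ ρ (w 0 j0)) →
      ∃ a a' b b', GLO ρ a a' ∧ GLO ρ b b' ∧ (a * w * b) 0 1 = 0 ∧ (a * w * b) 1 0 = 0 := by
    rintro w ⟨j0, h⟩
    fin_cases j0
    · exact key w h
    · obtain ⟨a, a', b, b', ha, hb, h0⟩ := key (w * !![0, 1; 1, 0]) (by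
        intro i j
        fin_cases j <;> simpa [Matrix.mul_apply, Fin.sum_univ_two] using h i _)
      exact ⟨a, a', _, _, ha, (GLO.swap ρ).mul hna hb, by simpa only [mul_assoc] using h0⟩
  obtain ⟨⟨i0, j0⟩, h⟩ := Finite.exists_max (fun p : Fin 2 × Fin 2 => ρ (w p.1 p.2))
  have h : ∀ i j, ρ (w i j) ≤ ρ (w i0 j0) := fun i j => h (i, j)
  fin_cases i0
  · exact key2 w ⟨j0, h⟩
  · obtain ⟨a, a', b, b', ha, hb, h0⟩ := key2 (!![0, 1; 1, 0] * w) ⟨j0, by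
      intro i j
      fin_cases i <;> simpa [Matrix.mul_apply, Fin.sum_univ_two] using h _ j⟩
    exact ⟨_, _, b, b', ha.mul hna (GLO.swap ρ), hb, by simpa only [mul_assoc] using h0⟩

/-- diagonal conjugation of integral diagonal matrices stays integral -/
theorem rho_conj {ρ : AbsoluteValue B ℝ} {a x : B} (ha : a ≠ 0) : ρ (a * x * a⁻¹) = ρ x := by
  have := ρ.ne_zero ha
  rw [ρ.map_mul, ρ.map_mul, map_inv₀]
  field_simp

/-- diagonal embedding, conjugated -/
theorem three_key (ρ : AbsoluteValue B ℝ) (hna : IsNonarchimedean ρ)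
    (u1 v1 u2 v2 u3 v3 : Matrix (Fin 2) (Fin 2) B)
    (h1 : u1 * v1 = 1) (h1' : v1 * u1 = 1) (h2 : u2 * v2 = 1) (h2' : v2 * u2 = 1)
    (h3 : u3 * v3 = 1) (h3' : v3 * u3 = 1) :
    ∃ g g' : Matrix (Fin 2) (Fin 2) B, g * g' = 1 ∧ g' * g = 1 ∧ ∀ x : B, ρ x ≤ 1 →
      EBd ρ 1 (v1 * (g * !![x, 0; 0, x] * g') * u1) ∧
      EBd ρ 1 (v2 * (g * !![x, 0; 0, x] * g') * u2) ∧
      EBd ρ 1 (v3 * (g * !![x, 0; 0, x] * g') * u3) := by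
  -- a * v1 * u2 * b = D
  obtain ⟨a, a', b, b', ha, hb, hD1, hD2⟩ := cartan ρ hna (v1 * u2)
  obtain ⟨c, c', hc, hT⟩ := iwasawa ρ hna (a * v1 * u3)
  set D := a * (v1 * u2) * b with hD
  set T := a * v1 * u3 * c with hTd
  have inv3 : ∀ {x y z w : Matrix (Fin 2) (Fin 2) B}, x * y = 1 → z * w = 1 →
      (x * z) * (w * y) = 1 := by
    intro x y z w hxy hzw
    rw [mul_assoc, ← mul_assoc z, hzw, one_mul, hxy]
  have hDD : D * (b' * ((v2 * u1) * a')) = 1 := by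
    rw [hD]
    exact inv3 (inv3 ha.h1 (inv3 h1' h2)) hb.h1
  have hTT : T * (c' * (v3 * (u1 * a'))) = 1 :=
    inv3 (inv3 (inv3 ha.h1 h1') h3) hc.h1
  have hDD' : (b' * ((v2 * u1) * a')) * D = 1 := by
    rw [hD]
    exact inv3 hb.h2 (inv3 (inv3 h2' h1) ha.h2) |> fun h => by simpa only [mul_assoc] using h
  have hTT' : (c' * (v3 * (u1 * a'))) * T = 1 := by
    have := inv3 hc.h2 (inv3 h3' (inv3 h1 ha.h2))
    simpa only [hTd, mul_assoc] using this
  set D' := b' * ((v2 * u1) * a') with hD'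
  set T' := c' * (v3 * (u1 * a')) with hT'
  have hu2 : u2 = u1 * a' * D * b' := by
    rw [hD]
    calc u2 = (u1 * v1) * u2 := by rw [h1, one_mul]
      _ = u1 * (1 * v1 * u2 * 1) := by simp only [one_mul, mul_one, mul_assoc]
      _ = u1 * ((a' * a) * v1 * u2 * (b * b')) := by rw [ha.h2, hb.h1]
      _ = _ := by simp only [mul_assoc]
  have hu3 : u3 = u1 * a' * T * c' := by
    rw [hTd]
    calc u3 = (u1 * v1) * u3 := by rw [h1, one_mul]
      _ = u1 * (1 * v1 * u3 * 1) := by simp only [one_mul, mul_one, mul_assoc]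
      _ = u1 * ((a' * a) * v1 * u3 * (c * c')) := by rw [ha.h2, hc.h1]
      _ = _ := by simp only [mul_assoc]
  have hv2 : v2 = b * D' * (a * v1) := by
    rw [hD']
    calc v2 = 1 * v2 * (u1 * 1 * v1) := by rw [mul_one, h1, one_mul, mul_one]
      _ = (b * b') * v2 * (u1 * (a' * a) * v1) := by rw [ha.h2, hb.h1]
      _ = _ := by simp only [mul_assoc]
  have hv3 : v3 = c * T' * (a * v1) := by
    rw [hT']
    calc v3 = 1 * v3 * (u1 * 1 * v1) := by rw [mul_one, h1, one_mul, mul_one]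
      _ = (c * c') * v3 * (u1 * (a' * a) * v1) := by rw [ha.h2, hc.h1]
      _ = _ := by simp only [mul_assoc]
  clear_value D T D' T'
  -- reduce to a statement about D, T
  suffices hs : ∃ α δ : B, α ≠ 0 ∧ δ ≠ 0 ∧ ∀ x : B, ρ x ≤ 1 →
      EBd ρ 1 (D' * !![α * x * α⁻¹, 0; 0, δ * x * δ⁻¹] * D) ∧
      EBd ρ 1 (T' * !![α * x * α⁻¹, 0; 0, δ * x * δ⁻¹] * T) by
    obtain ⟨α, δ, hα, hδ, hx⟩ := hs
    have e1 : (!![α, 0; 0, δ] : Matrix (Fin 2) (Fin 2) B) * !![α⁻¹, 0; 0, δ⁻¹] = 1 := by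
      simp [Matrix.mul_fin_two, Matrix.one_fin_two, hα, hδ]
    have e2 : (!![α⁻¹, 0; 0, δ⁻¹] : Matrix (Fin 2) (Fin 2) B) * !![α, 0; 0, δ] = 1 := by
      simp [Matrix.mul_fin_two, Matrix.one_fin_two, hα, hδ]
    refine ⟨u1 * a' * !![α, 0; 0, δ], !![α⁻¹, 0; 0, δ⁻¹] * (a * v1),
      inv3 (inv3 h1 ha.h2) e1, ?_, ?_⟩
    · have := inv3 e2 (inv3 ha.h1 h1')
      simpa only [mul_assoc] using this
    intro x hx1
    obtain ⟨hx2, hx3⟩ := hx x hx1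
    have e3 : (!![α, 0; 0, δ] : Matrix (Fin 2) (Fin 2) B) * !![x, 0; 0, x] * !![α⁻¹, 0; 0, δ⁻¹]
        = !![α * x * α⁻¹, 0; 0, δ * x * δ⁻¹] := by
      simp [Matrix.mul_fin_two]
    have e4 : u1 * a' * !![α, 0; 0, δ] * !![x, 0; 0, x] * (!![α⁻¹, 0; 0, δ⁻¹] * (a * v1))
        = u1 * a' * !![α * x * α⁻¹, 0; 0, δ * x * δ⁻¹] * (a * v1) := by
      rw [← e3]
      simp only [mul_assoc]
    rw [e4]
    generalize hX : (!![α * x * α⁻¹, 0; 0, δ * x * δ⁻¹] : Matrix (Fin 2) (Fin 2) B) = X at *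
    have hXb : EBd ρ 1 X := by
      rw [← hX]
      intro i j
      fin_cases i <;> fin_cases j <;> simp only [] <;>
        simp [rho_conj, hα, hδ, hx1, -AbsoluteValue.map_mul, -map_mul]
    have cancel : ∀ P Q : Matrix (Fin 2) (Fin 2) B,
        (P * (a * v1)) * (u1 * a' * X * (a * v1)) * (u1 * a' * Q) = P * X * Q := by
      intro P Q
      have hk : (a * v1) * (u1 * a') = 1 := inv3 ha.h1 h1'
      calc _ = P * ((a * v1) * (u1 * a')) * X * ((a * v1) * (u1 * a')) * Q := by
            simp only [mul_assoc]
        _ = _ := by rw [hk, mul_one, mul_one]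
    refine ⟨?_, ?_, ?_⟩
    · have : v1 * (u1 * a' * X * (a * v1)) * u1 = a' * X * a := by
        calc _ = (v1 * u1) * a' * X * a * (v1 * u1) := by simp only [mul_assoc]
          _ = _ := by rw [h1', one_mul, mul_one]
      rw [this]
      exact (ha.b2.mul1 hna hXb).mul1 hna ha.b1
    · rw [hv2, hu2, mul_assoc (u1 * a') D b', cancel]
      have := (hb.b1.mul1 hna hx2).mul1 hna hb.b2
      simpa only [mul_assoc] using this
    · rw [hv3, hu3, mul_assoc (u1 * a') T c', cancel]
      have := (hc.b1.mul1 hna hx3).mul1 hna hc.b2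
      simpa only [mul_assoc] using this
  -- now the commutation of D, T with twisted scalars
  have comm : ∀ {X Y Z Z' : Matrix (Fin 2) (Fin 2) B}, Z' * Z = 1 → X * Z = Z * Y → EBd ρ 1 Y →
      EBd ρ 1 (Z' * X * Z) := by
    intro X Y Z Z' hZ hXY hY
    rw [mul_assoc, hXY, ← mul_assoc, hZ, one_mul]
    exact hY
  have diagE : ∀ {p q : B}, ρ p ≤ 1 → ρ q ≤ 1 → EBd ρ 1 !![p, 0; 0, q] := by
    intro p q hp hq i j
    fin_cases i <;> fin_cases j <;> simp [hp, hq]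
  obtain ⟨d1, d2, d3, d4, rfl⟩ : ∃ d1 d2 d3 d4, D = !![d1, d2; d3, d4] :=
    ⟨_, _, _, _, Matrix.eta_fin_two D⟩
  obtain ⟨p, β, s, r, rfl⟩ : ∃ d1 d2 d3 d4, T = !![d1, d2; d3, d4] :=
    ⟨_, _, _, _, Matrix.eta_fin_two T⟩
  obtain rfl : d2 = 0 := by simpa using hD1
  obtain rfl : d3 = 0 := by simpa using hD2
  obtain rfl : s = 0 := by simpa using hT
  have hd1 : d1 ≠ 0 := by
    rintro rfl
    have := congrFun (congrFun hDD 0) 0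
    simp [Matrix.mul_apply, Fin.sum_univ_two] at this
  have hd4 : d4 ≠ 0 := by
    rintro rfl
    have := congrFun (congrFun hDD 1) 1
    simp [Matrix.mul_apply, Fin.sum_univ_two] at this
  have hp : p ≠ 0 := by
    rintro rfl
    have := congrFun (congrFun hTT' 0) 0
    simp [Matrix.mul_apply, Fin.sum_univ_two] at this
  have hr : r ≠ 0 := by
    rintro rfl
    have := congrFun (congrFun hTT 1) 1
    simp [Matrix.mul_apply, Fin.sum_univ_two] at this
  have conjE : ∀ {d y : B}, d ≠ 0 → ρ y ≤ 1 → ρ (d⁻¹ * y * d) ≤ 1 := by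
    intro d y hd hy
    have := rho_conj (ρ := ρ) (x := y) (inv_ne_zero hd)
    rw [inv_inv] at this
    rwa [this]
  have conjE' : ∀ {d y : B}, d ≠ 0 → ρ y ≤ 1 → ρ (d * y * d⁻¹) ≤ 1 := by
    intro d y hd hy
    rwa [rho_conj hd]
  have diagD : ∀ {X Y : B}, ρ X ≤ 1 → ρ Y ≤ 1 →
      EBd ρ 1 (D' * !![X, 0; 0, Y] * !![d1, 0; 0, d4]) := by
    intro X Y hX hY
    refine comm hDD' (Y := !![d1⁻¹ * X * d1, 0; 0, d4⁻¹ * Y * d4]) ?_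
      (diagE (conjE hd1 hX) (conjE hd4 hY))
    simp [Matrix.mul_fin_two, mul_assoc, mul_inv_cancel_left₀, hd1, hd4]
  by_cases hβ : β = 0
  · subst hβ
    refine ⟨1, 1, one_ne_zero, one_ne_zero, fun x hx => ⟨?_, ?_⟩⟩
    · exact diagD (by simpa using hx) (by simpa using hx)
    · refine comm hTT' (Y := !![p⁻¹ * x * p, 0; 0, r⁻¹ * x * r]) ?_
        (diagE (conjE hp hx) (conjE hr hx))
      simp [Matrix.mul_fin_two, mul_assoc, mul_inv_cancel_left₀, hp, hr]
  · refine ⟨β, r, hβ, hr, fun x hx => ⟨?_, ?_⟩⟩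
    · exact diagD (conjE' hβ hx) (conjE' hr hx)
    · refine comm hTT' (Y := !![p⁻¹ * (β * x * β⁻¹) * p, 0; 0, x]) ?_
        (diagE (conjE hp (conjE' hβ hx)) hx)
      simp [Matrix.mul_fin_two, mul_assoc, mul_inv_cancel_left₀, hp, hr, hβ]

/-- valuation of a scalar via a conjugate -/
theorem rho_le_of_conj (ρ : AbsoluteValue B ℝ) (hna : IsNonarchimedean ρ)
    {g g' : Matrix (Fin 2) (Fin 2) B} (h2 : g' * g = 1) {z : B} {s : ℝ}
    (hs : 0 < s) (h : EBd ρ s (g * !![z, 0; 0, z] * g')) : ρ z ≤ s := by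
  obtain ⟨C, hC, hg⟩ := EBd.exists ρ g
  obtain ⟨C', hC', hg'⟩ := EBd.exists ρ g'
  set N := g * !![z, 0; 0, z] * g' with hN
  have hpow : ∀ n : ℕ, EBd ρ (C' * s ^ n) (g' * N ^ n) ∧
      g' * N ^ n = !![z ^ n, 0; 0, z ^ n] * g' := by
    intro n
    induction n with
    | zero => 
      refine ⟨by simpa using hg', ?_⟩
      rw [pow_zero, pow_zero, ← Matrix.one_fin_two, mul_one, one_mul]
    | succ n ih =>
      refine ⟨?_, ?_⟩
      · have := ih.1.mul hna h
        rwa [mul_assoc, mul_assoc, ← pow_succ, ← pow_succ] at this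
      · rw [pow_succ, ← mul_assoc, ih.2, hN]
        calc _ = !![z ^ n, 0; 0, z ^ n] * (g' * g) * !![z, 0; 0, z] * g' := by
              simp only [mul_assoc]
          _ = _ := by
              rw [h2, mul_one]
              congr 1
              simp [Matrix.mul_fin_two, pow_succ]
  have hb : ∀ n : ℕ, ρ z ^ n ≤ C' * s ^ n * C := by
    intro n
    have := ((hpow n).1.mul hna hg) 0 0
    rw [(hpow n).2, mul_assoc, h2, mul_one] at this
    simpa using this
  by_contra hlt
  push Not at hlt
  obtain ⟨n, hn⟩ := pow_unbounded_of_one_lt (C' * C) ((one_lt_div hs).2 hlt)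
  rw [div_pow, lt_div_iff₀ (pow_pos hs n)] at hn
  have := hb n
  nlinarith

/-- The residue ring: congruence on the valuation ring. -/
theorem residue (ρ : AbsoluteValue B ℝ) (hna : IsNonarchimedean ρ)
    (hfinres : ∀ S : Set B, S = {x | ρ x ≤ 1} →
      Nat.card (Quot (fun a b : S => ρ ((a : B) - b) < 1)) ≠ 0) :
    ∃ q : ℕ, ρ (q : B) < 1 ∧ ∀ x : B, ρ x ≤ 1 → ρ (x ^ q - x) < 1 := by
  let O : Subring B :=
    { carrier := {x | ρ x ≤ 1}
      mul_mem' := fun {a b} ha hb => by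
        simpa using rho_mul (ρ := ρ) (C := 1) (D := 1) ha hb
      one_mem' := by simp
      add_mem' := fun {a b} ha hb => na_add hna ha hb
      zero_mem' := by simp
      neg_mem' := fun {a} ha => by simpa using ha }
  have na_lt : ∀ {x y : B}, ρ x < 1 → ρ y < 1 → ρ (x + y) < 1 := fun {x y} hx hy =>
    (hna x y).trans_lt (max_lt hx hy)
  let R : RingCon O :=
    { r := fun a b => ρ ((a : B) - b) < 1
      iseqv := 
        { refl := fun a => by simp
          symm := fun {a b} h => by rwa [ρ.map_sub]
          trans := fun {a b c} h k => by
            have := na_lt h k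
            rwa [sub_add_sub_cancel] at this }
      mul' := fun {a b c d} h k => by
        have e : ((a * c : O) : B) - ((b * d : O) : B)
            = ((a : B) - b) * c + b * ((c : B) - d) := by
          push_cast
          noncomm_ring
        change ρ (((a * c : O) : B) - ((b * d : O) : B)) < 1
        rw [e]
        apply na_lt
        · rw [ρ.map_mul]
          exact mul_lt_one_of_nonneg_of_lt_one_left (ρ.nonneg _) h c.2
        · rw [ρ.map_mul]
          exact mul_lt_one_of_nonneg_of_lt_one_right b.2 (ρ.nonneg _) k
      add' := fun {a b c d} h k => by
        have := na_lt h k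
        change ρ (((a + c : O) : B) - ((b + d : O) : B)) < 1
        push_cast
        rwa [add_sub_add_comm] }
  have hR : ∀ a b : O, ((a : R.Quotient) = b) ↔ ρ ((a : B) - b) < 1 := fun a b => R.eq
  have hfin : Finite R.Quotient := by
    have h0 := hfinres {x | ρ x ≤ 1} rfl
    have : Finite (Quot (fun a b : {x | ρ x ≤ 1} => ρ ((a : B) - b) < 1)) :=
      Nat.finite_of_card_ne_zero h0
    let f : Quot (fun a b : {x | ρ x ≤ 1} => ρ ((a : B) - b) < 1) → R.Quotient :=
      Quot.lift (fun a => ((⟨a.1, a.2⟩ : O) : R.Quotient)) (fun a b h => (hR _ _).2 h)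
    refine Finite.of_surjective f ?_
    intro y
    induction y using Quotient.inductionOn' with
    | h a => exact ⟨Quot.mk _ ⟨a.1, a.2⟩, rfl⟩
  have hnt : Nontrivial R.Quotient := by
    refine ⟨((0 : O) : R.Quotient), ((1 : O) : R.Quotient), fun h => ?_⟩
    have := (hR _ _).1 h
    simp at this
  have hnz : NoZeroDivisors R.Quotient := by
    constructor
    intro x y
    induction x using Quotient.inductionOn' with
    | h a =>
    induction y using Quotient.inductionOn' with
    | h b =>
    intro h
    have h1 : ρ (((a * b : O) : B) - ((0 : O) : B)) < 1 := (hR (a * b) 0).1 h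
    by_contra hc
    rw [not_or] at hc
    have ha : ¬ ρ ((a : B) - ((0 : O) : B)) < 1 := fun k => hc.1 ((hR a 0).2 k)
    have hb : ¬ ρ ((b : B) - ((0 : O) : B)) < 1 := fun k => hc.2 ((hR b 0).2 k)
    simp only [ZeroMemClass.coe_zero, sub_zero, not_lt, Subring.coe_mul, ρ.map_mul] at ha hb h1
    nlinarith
  have hdom : IsDomain R.Quotient := NoZeroDivisors.to_isDomain _
  have hfield := Finite.isDomain_to_isField R.Quotient
  have : ∃ q : ℕ, ((q : ℕ) : R.Quotient) = 0 ∧ ∀ x : R.Quotient, x ^ q = x := by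
    letI := hfield.toField
    letI := Fintype.ofFinite R.Quotient
    exact ⟨Fintype.card R.Quotient, FiniteField.cast_card_eq_zero _, FiniteField.pow_card⟩
  obtain ⟨q, hq, hpow⟩ := this
  refine ⟨q, ?_, fun x hx => ?_⟩
  · have := (hR (q : O) 0).1 (by simpa using hq)
    simpa using this
  · have := (hR ((⟨x, hx⟩ : O) ^ q) ⟨x, hx⟩).1 (by simpa using hpow _)
    simpa using this

/-- If all commutators are small to order 2, everything commutes. -/
theorem comm_of_small (ρ : AbsoluteValue B ℝ) (hna : IsNonarchimedean ρ)
    (πB : B)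
    (hπB : 0 < ρ πB ∧ ρ πB < 1 ∧ ∀ x : B, x ≠ 0 → ρ x < 1 → ρ x ≤ ρ πB)
    (hfinres : ∀ S : Set B, S = {x | ρ x ≤ 1} →
      Nat.card (Quot (fun a b : S => ρ ((a : B) - b) < 1)) ≠ 0)
    (h2 : ∀ x y : B, ρ x ≤ 1 → ρ y ≤ 1 → ρ (x * y - y * x) ≤ ρ πB ^ 2) :
    ∀ x y : B, ρ x ≤ 1 → ρ y ≤ 1 → x * y = y * x := by
  obtain ⟨q, hq, hpow⟩ := residue ρ hna hfinres
  obtain ⟨h0, h1, hmax⟩ := hπB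
  have hπ0 : πB ≠ 0 := by
    rintro rfl
    simp at h0
  set r := ρ πB with hr
  have hmax' : ∀ x : B, ρ x < 1 → ρ x ≤ r := by
    intro x hx
    by_cases h : x = 0
    · simp [h, h0.le]
    · exact hmax x h hx
  have hrpow : ∀ {m n : ℕ}, m ≤ n → r ^ n ≤ r ^ m := fun h =>
    pow_le_pow_of_le_one h0.le h1.le h
  have hdiv : ∀ (n : ℕ) (x : B), ρ x ≤ r ^ (n + 1) → ∃ z, ρ z ≤ r ^ n ∧ x = πB * z := by
    intro n x hx
    refine ⟨πB⁻¹ * x, ?_, by rw [mul_inv_cancel_left₀ hπ0]⟩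
    rw [ρ.map_mul, map_inv₀, ← hr, inv_mul_le_iff₀ h0, ← pow_succ']
    exact hx
  have hmul : ∀ {x y : B} {m n : ℕ}, ρ x ≤ r ^ m → ρ y ≤ r ^ n → ρ (x * y) ≤ r ^ (m + n) := by
    intro x y m n hx hy
    rw [pow_add]
    exact rho_mul hx hy
  -- near-commutation
  have hcom : ∀ (n : ℕ) (a d : B), ρ a ≤ 1 → ρ d ≤ r ^ n → ρ (a * d - d * a) ≤ r ^ (n + 1) := by
    intro n
    induction n with
    | zero =>
      intro a d ha hd
      exact (h2 a d ha (by simpa using hd)).trans (hrpow (by norm_num))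
    | succ n ih =>
      intro a d ha hd
      obtain ⟨z, hz, rfl⟩ := hdiv n d hd
      have e : a * (πB * z) - πB * z * a = (a * πB - πB * a) * z + πB * (a * z - z * a) := by
        noncomm_ring
      rw [e]
      refine na_add hna ?_ ?_
      · have := hmul (h2 a πB ha h1.le) hz
        rwa [show n + 1 + 1 = 2 + n by ring]
      · have := hmul (m := 1) (x := πB) (by simp [← hr]) (ih a z ha hz)
        rwa [show n + 1 + 1 = 1 + (n + 1) by ring]
  have hstep : ∀ n : ℕ, 1 ≤ n → (∀ x y : B, ρ x ≤ 1 → ρ y ≤ 1 → ρ (x * y - y * x) ≤ r ^ n) →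
      ∀ x y : B, ρ x ≤ 1 → ρ y ≤ 1 → ρ (x * y - y * x) ≤ r ^ (n + 1) := by
    intro n hn1 hn
    have hpow1 : ∀ {x : B} (m : ℕ), ρ x ≤ 1 → ρ (x ^ m) ≤ 1 := by
      intro x m hx
      rw [map_pow]
      exact pow_le_one₀ (ρ.nonneg _) hx
    -- derivation property
    have hder : ∀ x y : B, ρ x ≤ 1 → ρ y ≤ 1 → ∀ m : ℕ,
        ρ ((x ^ (m + 1) * y - y * x ^ (m + 1)) - ((m + 1 : ℕ) : B) * (x ^ m * (x * y - y * x)))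
          ≤ r ^ (n + 1) := by
      intro x y hx hy m
      induction m with
      | zero => 
        simp only [zero_add, pow_one, pow_zero, Nat.cast_one, one_mul, sub_self, map_zero]
        positivity
      | succ m ih =>
        have e : (x ^ (m + 1 + 1) * y - y * x ^ (m + 1 + 1))
              - ((m + 1 + 1 : ℕ) : B) * (x ^ (m + 1) * (x * y - y * x))
            = x * ((x ^ (m + 1) * y - y * x ^ (m + 1))
                - ((m + 1 : ℕ) : B) * (x ^ m * (x * y - y * x)))
              + -(x ^ (m + 1) * (x * y - y * x) - (x * y - y * x) * x ^ (m + 1)) := by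
          have hc : x * (((m + 1 : ℕ) : B) * (x ^ m * (x * y - y * x)))
              = ((m + 1 : ℕ) : B) * (x ^ (m + 1) * (x * y - y * x)) := by
            rw [← mul_assoc, ← (Nat.cast_commute (m + 1) x).eq, mul_assoc, ← mul_assoc x,
              ← pow_succ']
          rw [mul_sub x, hc, Nat.cast_succ (m + 1), add_mul, one_mul]
          generalize ((m + 1 : ℕ) : B) * (x ^ (m + 1) * (x * y - y * x)) = W
          rw [pow_succ x (m + 1)]
          have hcx : x * x ^ (m + 1) = x ^ (m + 1) * x := by rw [← pow_succ, ← pow_succ']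
          generalize x ^ (m + 1) = X at *
          have : x * (X * y - y * X) = X * x * y - x * y * X := by
            rw [mul_sub, ← mul_assoc, hcx, ← mul_assoc]
          rw [this]
          have h3 : y * (X * x) = y * x * X := by rw [← hcx, mul_assoc]
          rw [h3]
          noncomm_ring
        rw [e]
        refine na_add hna ?_ ?_
        · simpa using rho_mul hx ih
        · rw [ρ.map_neg]
          exact hcom n _ _ (hpow1 _ hx) (hn x y hx hy)
    have hq0 : q ≠ 0 := by
      rintro rfl
      have := hpow 0 (by simp)
      simp at this
    have hqpow : ∀ x y : B, ρ x ≤ 1 → ρ y ≤ 1 → ρ (x ^ q * y - y * x ^ q) ≤ r ^ (n + 1) := by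
      intro x y hx hy
      obtain ⟨m, rfl⟩ := Nat.exists_eq_succ_of_ne_zero hq0
      have hA := hder x y hx hy m
      have hB : ρ (((m + 1 : ℕ) : B) * (x ^ m * (x * y - y * x))) ≤ r ^ (n + 1) := by
        rw [add_comm n 1]
        refine hmul (by simpa using hmax' _ hq) ?_
        simpa using rho_mul (hpow1 m hx) (hn x y hx hy)
      have := na_add hna hA hB
      rwa [sub_add_cancel] at this
    have hsplit : ∀ x : B, ρ x ≤ 1 → ∃ z, ρ z ≤ 1 ∧ x = x ^ q + πB * z := by
      intro x hx
      obtain ⟨z, hz, e⟩ := hdiv 0 (x - x ^ q) (by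
        rw [ρ.map_sub]
        simpa using hmax' _ (hpow x hx))
      exact ⟨z, by simpa using hz, by rw [← e]; abel⟩
    have hπy : ∀ y : B, ρ y ≤ 1 → ρ (πB * y - y * πB) ≤ r ^ (n + 1) := by
      intro y hy
      obtain ⟨w, hw, e⟩ := hsplit y hy
      have e2 : πB * y - y * πB
          = -(y ^ q * πB - πB * y ^ q) + πB * (πB * w - w * πB) := by
        have : πB * y - y * πB = πB * (y ^ q + πB * w) - (y ^ q + πB * w) * πB := by rw [← e]
        rw [this]
        generalize y ^ q = Y
        noncomm_ring
      rw [e2]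
      refine na_add hna ?_ ?_
      · rw [ρ.map_neg]
        exact hqpow y πB hy h1.le
      · rw [add_comm n 1]
        exact hmul (by simp [← hr]) (hn πB w h1.le hw)
    intro x y hx hy
    obtain ⟨z, hz, e⟩ := hsplit x hx
    have e2 : x * y - y * x
        = (x ^ q * y - y * x ^ q) + ((πB * y - y * πB) * z + πB * (z * y - y * z)) := by
      have : x * y - y * x = (x ^ q + πB * z) * y - y * (x ^ q + πB * z) := by rw [← e]
      rw [this]
      generalize x ^ q = X
      noncomm_ring
    rw [e2]
    refine na_add hna (hqpow x y hx hy) (na_add hna ?_ ?_)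
    · simpa using rho_mul (hπy y hy) hz
    · rw [add_comm n 1]
      exact hmul (by simp [← hr]) (hn z y hz hy)
  have hall : ∀ n : ℕ, ∀ x y : B, ρ x ≤ 1 → ρ y ≤ 1 → ρ (x * y - y * x) ≤ r ^ (n + 2) := by
    intro n
    induction n with
    | zero => exact h2
    | succ n ih => exact hstep (n + 2) (by omega) ih
  intro x y hx hy
  by_contra hne
  have hpos : 0 < ρ (x * y - y * x) := ρ.pos (sub_ne_zero.2 hne)
  obtain ⟨n, hn⟩ := exists_pow_lt_of_lt_one hpos h1
  exact absurd ((hall n x y hx hy).trans (hrpow (Nat.le_add_right n 2))) (not_le.2 hn)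

/-- Commutators in the congruence order are small. -/
theorem congruence_comm (ρ : AbsoluteValue B ℝ) (hna : IsNonarchimedean ρ) (πB : B) (t : ℕ)
    {h k : Matrix (Fin 2) (Fin 2) B} (hh : h ∈ congruenceOrder ρ πB t)
    (hk : k ∈ congruenceOrder ρ πB t) : EBd ρ (ρ πB ^ t) (h * k - k * h) := by
  obtain ⟨hh1, c, hc, hcc, hhc⟩ := hh
  obtain ⟨hk1, d, hd, hdc, hkd⟩ := hk
  have eIf : ∀ c : B, ∀ i j, (!![c, 0; 0, c] : Matrix (Fin 2) (Fin 2) B) i j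
      = if i = j then c else 0 := by
    intro c i j
    fin_cases i <;> fin_cases j <;> simp
  have hE : EBd ρ (ρ πB ^ t) (h - !![c, 0; 0, c]) := by
    intro i j
    rw [Matrix.sub_apply, eIf]
    exact hhc i j
  have hF : EBd ρ (ρ πB ^ t) (k - !![d, 0; 0, d]) := by
    intro i j
    rw [Matrix.sub_apply, eIf]
    exact hkd i j
  have hC : EBd ρ 1 !![c, 0; 0, c] := by
    intro i j
    fin_cases i <;> fin_cases j <;> simp [hc]
  have hCD : EBd ρ (ρ πB ^ t) (!![c, 0; 0, c] * !![d, 0; 0, d] - !![d, 0; 0, d] * !![c, 0; 0, c]) := by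
    have h1 := hcc d hd
    intro i j
    fin_cases i <;> fin_cases j <;> simp [Matrix.mul_fin_two] <;> first | exact h1 | skip
  have hh1 : EBd ρ 1 h := hh1
  have hk1 : EBd ρ 1 k := hk1
  generalize (!![c, 0; 0, c] : Matrix (Fin 2) (Fin 2) B) = C at *
  generalize (!![d, 0; 0, d] : Matrix (Fin 2) (Fin 2) B) = D at *
  have e : h * k - k * h = ((h - C) * k - k * (h - C)) + ((C * (k - D) - (k - D) * C)
      + (C * D - D * C)) := by noncomm_ring
  rw [e]
  refine EBd.add hna (EBd.sub hna ?_ ?_) (EBd.add hna (EBd.sub hna ?_ ?_) hCD)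
  · simpa using hE.mul hna hk1
  · simpa using hk1.mul hna hE
  · simpa using hC.mul hna hF
  · simpa using hF.mul hna hC

/-- Theorem 1.2, key part: let B be a noncommutative central
division algebra over a local field.  The order Δ₀^{[2]} (integral matrices
central modulo M²) is not the intersection of any three maximal orders of
M₂(B). -/
theorem congruence_order_not_intersection_of_three
    (ρ : AbsoluteValue B ℝ) (hna : IsNonarchimedean ρ)
    (πB : B)
    (hπB : 0 < ρ πB ∧ ρ πB < 1 ∧ ∀ x : B, x ≠ 0 → ρ x < 1 → ρ x ≤ ρ πB)
    (hdisc : ∀ x : B, x ≠ 0 → ∃ k : ℤ, ρ x = ρ πB ^ k)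
    (hfinres : ∀ S : Set B, S = {x | ρ x ≤ 1} →
      Nat.card (Quot (fun a b : S => ρ ((a : B) - b) < 1)) ≠ 0)
    (hnoncomm : ∃ x y : B, x * y ≠ y * x) :
    ¬ ∃ Δ₁ Δ₂ Δ₃ : Set (Matrix (Fin 2) (Fin 2) B),
        IsMaxOrder ρ Δ₁ ∧ IsMaxOrder ρ Δ₂ ∧ IsMaxOrder ρ Δ₃ ∧
        congruenceOrder ρ πB 2 = Δ₁ ∩ Δ₂ ∩ Δ₃ := by
  rintro ⟨Δ₁, Δ₂, Δ₃, ⟨u1, v1, h1, h1', rfl⟩, ⟨u2, v2, h2, h2', rfl⟩, ⟨u3, v3, h3, h3', rfl⟩, heq⟩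
  obtain ⟨g, g', hg, hg', hx⟩ := three_key ρ hna u1 v1 u2 v2 u3 v3 h1 h1' h2 h2' h3 h3'
  have hmem : ∀ x : B, ρ x ≤ 1 → g * !![x, 0; 0, x] * g' ∈ congruenceOrder ρ πB 2 := by
    intro x hx1
    obtain ⟨k1, k2, k3⟩ := hx x hx1
    have aux : ∀ {u v : Matrix (Fin 2) (Fin 2) B}, u * v = 1 →
        ∀ X : Matrix (Fin 2) (Fin 2) B, X = u * (v * X * u) * v := by
      intro u v huv X
      calc X = (u * v) * X * (u * v) := by rw [huv, one_mul, mul_one]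
        _ = _ := by simp only [mul_assoc]
    rw [heq]
    exact ⟨⟨⟨_, k1, aux h1 _⟩, ⟨_, k2, aux h2 _⟩⟩, ⟨_, k3, aux h3 _⟩⟩
  have hsmall : ∀ x y : B, ρ x ≤ 1 → ρ y ≤ 1 → ρ (x * y - y * x) ≤ ρ πB ^ 2 := by
    intro x y hx1 hy1
    have hb := congruence_comm ρ hna πB 2 (hmem x hx1) (hmem y hy1)
    refine rho_le_of_conj ρ hna hg' (pow_pos hπB.1 2) ?_
    have e : g * !![x, 0; 0, x] * g' * (g * !![y, 0; 0, y] * g')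
        - g * !![y, 0; 0, y] * g' * (g * !![x, 0; 0, x] * g')
        = g * !![x * y - y * x, 0; 0, x * y - y * x] * g' := by
      have e1 : ∀ X Y : Matrix (Fin 2) (Fin 2) B, g * X * g' * (g * Y * g') = g * (X * Y) * g' := by
        intro X Y
        calc _ = g * X * (g' * g) * Y * g' := by simp only [mul_assoc]
          _ = _ := by rw [hg', mul_one]; simp only [mul_assoc]
      rw [e1, e1, ← sub_mul, ← mul_sub]
      congr 2
      ext i j
      fin_cases i <;> fin_cases j <;> simp [Matrix.mul_fin_two]
    rwa [e] at hb
  have hcomm := comm_of_small ρ hna πB hπB hfinres hsmall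
  obtain ⟨x, y, hxy⟩ := hnoncomm
  apply hxy
  -- reduce to integral elements by inverting
  have hinv : ∀ x : B, ¬ ρ x ≤ 1 → ρ x⁻¹ ≤ 1 := by
    intro x hx
    rw [map_inv₀]
    exact inv_le_one_of_one_le₀ (not_le.1 hx).le
  have hc1 : ∀ x y : B, ρ x ≤ 1 → Commute x y := by
    intro x y hx1
    by_cases hy : ρ y ≤ 1
    · exact hcomm x y hx1 hy
    · exact Commute.inv_right_iff₀.1 (hcomm x y⁻¹ hx1 (hinv y hy))
  by_cases hx1 : ρ x ≤ 1
  · exact hc1 x y hx1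
  · exact Commute.inv_left_iff₀.1 (hc1 x⁻¹ y (hinv x hx1))

end
end
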